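/- arXiv:1405.6107 — 3 statements merged into one kernel-verified Lean document; each statement's English description precedes it below -/
import Mathlib

section
/- The following three assertions are equivalent: (1) every productively quasi-Lindelöf topological space is powerfully quasi-Lindelöf; (2) every productively Lindelöf space is powerfully Lindelöf; (3) every zero-dimensional productively Lindelöf space is powerfully Lindelöf. -/
open Set Cardinal Topology

universe u v

/-- A space is quasi-Lindelöf if every open cover has a countable subcover
(no separation axioms assumed). -/
def QuasiLindelofSp (X : Type u) [TopologicalSpace X] : Prop :=
  ∀ 𝒰 : Set (Set X), (∀ U ∈ 𝒰, IsOpen U) → ⋃₀ 𝒰 = Set.univ →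
    ∃ 𝒱 ⊆ 𝒰, 𝒱.Countable ∧ ⋃₀ 𝒱 = Set.univ

/-- Lindelöf in the sense of Engelking: regular (T3, including T1) and
every open cover has a countable subcover. -/
def EngLindelofSp (X : Type u) [TopologicalSpace X] : Prop :=
  RegularSpace X ∧ T1Space X ∧ QuasiLindelofSp X

/-- X is productively Lindelöf if X × Y is Lindelöf for every Lindelöf space Y. -/
def ProductivelyLindelofSp (X : Type u) [TopologicalSpace X] : Prop :=
  ∀ (Y : Type u) [TopologicalSpace Y], EngLindelofSp Y → EngLindelofSp (X × Y)

/-- X is productively quasi-Lindelöf if X × Y is quasi-Lindelöf for every Lindelöf space Y. -/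
def ProductivelyQuasiLindelofSp (X : Type u) [TopologicalSpace X] : Prop :=
  ∀ (Y : Type u) [TopologicalSpace Y], EngLindelofSp Y → QuasiLindelofSp (X × Y)

/-- X is powerfully Lindelöf if X^ω is Lindelöf. -/
def PowerfullyLindelofSp (X : Type u) [TopologicalSpace X] : Prop :=
  EngLindelofSp (ℕ → X)

/-- X is powerfully quasi-Lindelöf if X^ω is quasi-Lindelöf. -/
def PowerfullyQuasiLindelofSp (X : Type u) [TopologicalSpace X] : Prop :=
  QuasiLindelofSp (ℕ → X)

/-- Tightness of X is at most κ. -/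
def TightnessLE (X : Type u) [TopologicalSpace X] (κ : Cardinal.{u}) : Prop :=
  ∀ (A : Set X) (x : X), x ∈ closure A → ∃ B ⊆ A, #B ≤ κ ∧ x ∈ closure B

/-- X has countable tightness. -/
def CountableTightness (X : Type u) [TopologicalSpace X] : Prop :=
  ∀ (A : Set X) (x : X), x ∈ closure A → ∃ B ⊆ A, B.Countable ∧ x ∈ closure B

/-- The Lindelöf number of X is at most κ: every open cover has a subcover of size ≤ κ. -/
def LindelofNumberLE (X : Type u) [TopologicalSpace X] (κ : Cardinal.{u}) : Prop :=
  ∀ 𝒰 : Set (Set X), (∀ U ∈ 𝒰, IsOpen U) → ⋃₀ 𝒰 = Set.univ →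
    ∃ 𝒱 ⊆ 𝒰, #𝒱 ≤ κ ∧ ⋃₀ 𝒱 = Set.univ

/-- The weight of X is at most κ: there is a base of size ≤ κ. -/
def WeightLE (X : Type u) [TopologicalSpace X] (κ : Cardinal.{u}) : Prop :=
  ∃ B : Set (Set X), TopologicalSpace.IsTopologicalBasis B ∧ #B ≤ κ

/-- N is a network for X. -/
def IsNetwork (X : Type u) [TopologicalSpace X] (N : Set (Set X)) : Prop :=
  ∀ (x : X) (U : Set X), IsOpen U → x ∈ U → ∃ n ∈ N, x ∈ n ∧ n ⊆ U

/-- X is linearly Lindelöf: regular (incl. T1) and every open cover linearly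
ordered by inclusion has a countable subcover. -/
def LinearlyLindelofSp (X : Type u) [TopologicalSpace X] : Prop :=
  RegularSpace X ∧ T1Space X ∧
    ∀ 𝒰 : Set (Set X), (∀ U ∈ 𝒰, IsOpen U) → IsChain (· ⊆ ·) 𝒰 → ⋃₀ 𝒰 = Set.univ →
      ∃ 𝒱 ⊆ 𝒰, 𝒱.Countable ∧ ⋃₀ 𝒱 = Set.univ

/-- U ⊆ X^ω is a basic open set: a product of open sets, all but finitely many of
which equal X. -/
def IsBasicOpen (X : Type u) [TopologicalSpace X] (U : Set (ℕ → X)) : Prop :=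
  ∃ V : ℕ → Set X, (∀ i, IsOpen (V i)) ∧ {i | V i ≠ Set.univ}.Finite ∧
    U = Set.pi Set.univ V

/-- A family of subsets of Z is point-κ if every point belongs to at most κ members. -/
def PointLE {Z : Type u} (𝒲 : Set (Set Z)) (κ : Cardinal.{u}) : Prop :=
  ∀ z : Z, #({W ∈ 𝒲 | z ∈ W}) ≤ κ

/-- A non-empty space is zero-dimensional if it is T1 and has a base of clopen sets. -/
def ZeroDimensionalSp (Y : Type u) [TopologicalSpace Y] : Prop :=
  Nonempty Y ∧ T1Space Y ∧
    ∃ B : Set (Set Y), TopologicalSpace.IsTopologicalBasis B ∧ ∀ b ∈ B, IsClopen b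

theorem quasi_iff (X : Type u) [TopologicalSpace X] : QuasiLindelofSp X ↔ LindelofSpace X := by
  constructor
  · intro h
    refine ⟨isLindelof_of_countable_subcover ?_⟩
    intro ι U hU hc
    obtain ⟨V, hV, hVc, hVu⟩ := h (range U) (by rintro _ ⟨i, rfl⟩; exact hU i)
      (by rw [sUnion_range]; exact univ_subset_iff.1 hc)
    choose g hg using hV
    have := hVc.to_subtype
    refine ⟨range fun S : V => g S.2, countable_range _, ?_⟩
    rw [← hVu]
    rintro x ⟨S, hS, hx⟩
    refine mem_iUnion₂.2 ⟨g hS, ⟨⟨S, hS⟩, rfl⟩, ?_⟩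
    rw [hg hS]
    exact hx
  · intro h 𝒰 hU hc
    obtain ⟨t, htc, ht⟩ := (isLindelof_univ (X := X)).elim_countable_subcover
      (fun U : 𝒰 => (U : Set X)) (fun U => hU U U.2) (by rw [← sUnion_eq_iUnion, hc])
    refine ⟨Subtype.val '' t, by rintro _ ⟨a, -, rfl⟩; exact a.2, htc.image _, ?_⟩
    rw [sUnion_image]
    exact univ_subset_iff.1 ht

theorem lindelof_prod_compact (A C : Type u) [TopologicalSpace A] [TopologicalSpace C]
    [LindelofSpace A] [CompactSpace C] : LindelofSpace (A × C) := by
  refine ⟨isLindelof_of_countable_subcover ?_⟩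
  intro ι U hU hc
  have key : ∀ a : A, ∃ (F : Finset ι) (N : Set A), N ∈ 𝓝 a ∧
      N ×ˢ (univ : Set C) ⊆ ⋃ i ∈ F, U i := by
    intro a
    obtain ⟨F, hF⟩ := ((isCompact_singleton (x := a)).prod
      (isCompact_univ (X := C))).elim_finite_subcover U hU ((subset_univ _).trans hc)
    obtain ⟨u, v, hu, -, hau, hv, huv⟩ := generalized_tube_lemma (isCompact_singleton (x := a))
      (isCompact_univ (X := C)) (isOpen_biUnion fun i (_ : i ∈ F) => hU i) hF
    exact ⟨F, u, hu.mem_nhds (hau rfl), (prod_mono le_rfl hv).trans huv⟩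
  choose F N hN hFN using key
  obtain ⟨t, htc, ht⟩ := LindelofSpace.elim_nhds_subcover N hN
  refine ⟨⋃ a ∈ t, (F a : Set ι), htc.biUnion fun a _ => (F a).countable_toSet, ?_⟩
  rintro ⟨a, c⟩ -
  have : a ∈ ⋃ x ∈ t, N x := ht ▸ mem_univ a
  simp only [mem_iUnion] at this
  obtain ⟨x, hx, hax⟩ := this
  have h2 := hFN x (⟨hax, mem_univ c⟩ : (a, c) ∈ N x ×ˢ (univ : Set C))
  simp only [mem_iUnion] at h2
  obtain ⟨i, hi, h3⟩ := h2
  simp only [mem_iUnion]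
  exact ⟨i, ⟨x, hx, hi⟩, h3⟩

/-- the zero-dimensional space associated with `X` -/
abbrev ZSp (X : Type u) [TopologicalSpace X] : Type u :=
  {z : Set X → Bool // ∃ x, ∀ O, IsOpen O → x ∈ O → z O = true}

theorem zsp_basis (X : Type u) [TopologicalSpace X] :
    TopologicalSpace.IsTopologicalBasis {s : Set (ZSp X) | IsClopen s} := by
  refine TopologicalSpace.isTopologicalBasis_of_isOpen_of_nhds (fun s hs => hs.isOpen) ?_
  intro z U hz hU
  obtain ⟨W, hW, rfl⟩ := isOpen_induced_iff.1 hU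
  obtain ⟨V, hV, hzV, hVW⟩ := (isTopologicalBasis_isClopen
    (X := Set X → Bool)).exists_subset_of_mem_open hz hW
  exact ⟨_, IsClopen.preimage hV continuous_subtype_val, hzV, preimage_mono hVW⟩

theorem zsp_lindelof (X Y : Type u) [TopologicalSpace X] [TopologicalSpace Y]
    [LindelofSpace (X × Y)] : LindelofSpace (ZSp X × Y) := by
  have := lindelof_prod_compact (X × Y) (Set X → Bool)
  let G : Set ((X × Y) × (Set X → Bool)) := {p | ∀ O, IsOpen O → p.1.1 ∈ O → p.2 O = true}
  have hG : IsClosed G := by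
    have : G = ⋂ (O : Set X) (_ : IsOpen O), {p | p.1.1 ∈ Oᶜ} ∪ {p | p.2 O = true} := by
      ext p
      simp only [G, mem_ofPred_eq, mem_iInter, mem_union, mem_compl_iff]
      refine forall_congr' fun O => forall_congr' fun _ => ?_
      tauto
    rw [this]
    refine isClosed_iInter fun O => isClosed_iInter fun hO => IsClosed.union ?_ ?_
    · exact hO.isClosed_compl.preimage (by fun_prop)
    · exact isClosed_eq (by fun_prop) continuous_const
  have hGL : LindelofSpace G := isLindelof_iff_lindelofSpace.1 hG.isLindelof
  let f : G → ZSp X × Y := fun p => (⟨p.1.2, p.1.1.1, p.2⟩, p.1.1.2)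
  have hf : Continuous f := by
    refine Continuous.prodMk (Continuous.subtype_mk ?_ _) ?_ <;> fun_prop
  have hs : range f = Set.univ := by
    refine eq_univ_of_forall ?_
    rintro ⟨⟨z, x, hz⟩, y⟩
    exact ⟨⟨((x, y), z), hz⟩, rfl⟩
  exact ⟨hs ▸ isLindelof_range hf⟩

theorem power_of_zsp (X : Type u) [TopologicalSpace X] [LindelofSpace (ℕ → ZSp X)] :
    QuasiLindelofSp (ℕ → X) := by
  classical
  intro 𝒰 hU hc
  have key : ∀ x : ℕ → X, ∃ U ∈ 𝒰, ∃ (I : Finset ℕ) (V : ℕ → Set X),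
      (∀ i ∈ I, IsOpen (V i) ∧ x i ∈ V i) ∧ (I : Set ℕ).pi V ⊆ U := by
    intro x
    obtain ⟨U, hUU, hx⟩ : x ∈ ⋃₀ 𝒰 := hc ▸ mem_univ x
    obtain ⟨I, V, h1, h2⟩ := isOpen_pi_iff.1 (hU U hUU) x hx
    exact ⟨U, hUU, I, V, h1, h2⟩
  choose U hUU I V hV hVU using key
  let W : (ℕ → X) → Set (ℕ → ZSp X) := fun x => ⋂ i ∈ I x, {z | (z i).1 (V x i) = true}
  have hW : ∀ x, IsOpen (W x) := fun x => isOpen_biInter_finset fun i _ => by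
    have : Continuous fun z : ℕ → ZSp X => (z i).1 (V x i) :=
      (continuous_apply (V x i)).comp (continuous_subtype_val.comp (continuous_apply i))
    exact (isOpen_discrete {true}).preimage this
  obtain ⟨t, htc, ht⟩ := (isLindelof_univ (X := ℕ → ZSp X)).elim_countable_subcover W hW (by
    intro z _
    choose x hx using fun i => (z i).2
    refine mem_iUnion.2 ⟨x, mem_iInter₂.2 fun i hi => ?_⟩
    exact hx i _ (hV x i hi).1 (hV x i hi).2)
  refine ⟨U '' t, by rintro _ ⟨a, -, rfl⟩; exact hUU a, htc.image _, eq_univ_of_forall fun x => ?_⟩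
  let z : ℕ → ZSp X := fun i => ⟨fun O => decide (x i ∈ O), x i, by simp⟩
  obtain ⟨a, ha, hz⟩ := mem_iUnion₂.1 (ht (mem_univ z))
  refine ⟨U a, mem_image_of_mem _ ha, hVU a fun i hi => ?_⟩
  have := mem_iInter₂.1 hz i hi
  simpa [z] using this

theorem pl_sep (X : Type u) [TopologicalSpace X] (h : ProductivelyLindelofSp X) :
    RegularSpace X ∧ T1Space X := by
  obtain ⟨h1, h2, -⟩ := h PUnit ⟨inferInstance, inferInstance, (quasi_iff _).2 inferInstance⟩
  have e : IsEmbedding (fun x : X => (x, PUnit.unit.{u+1})) :=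
    (Homeomorph.prodPUnit X).symm.isEmbedding
  exact ⟨e.isInducing.regularSpace, e.t1Space⟩

/-- The following are equivalent: (1) every productively quasi-Lindelöf
space is powerfully quasi-Lindelöf; (2) every productively Lindelöf space is powerfully
Lindelöf; (3) every zero-dimensional productively Lindelöf space is powerfully Lindelöf. -/
theorem stmt12 :
    ((∀ (X : Type u) [TopologicalSpace X],
        ProductivelyQuasiLindelofSp X → PowerfullyQuasiLindelofSp X) ↔
      (∀ (X : Type u) [TopologicalSpace X],
        ProductivelyLindelofSp X → PowerfullyLindelofSp X)) ∧
    ((∀ (X : Type u) [TopologicalSpace X],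
        ProductivelyLindelofSp X → PowerfullyLindelofSp X) ↔
      (∀ (X : Type u) [TopologicalSpace X],
        ZeroDimensionalSp X → ProductivelyLindelofSp X → PowerfullyLindelofSp X)) := by
  have h12 : (∀ (X : Type u) [TopologicalSpace X],
        ProductivelyQuasiLindelofSp X → PowerfullyQuasiLindelofSp X) →
      (∀ (X : Type u) [TopologicalSpace X],
        ProductivelyLindelofSp X → PowerfullyLindelofSp X) := by
    intro h X _ hX
    obtain ⟨h1, h2⟩ := pl_sep X hX
    exact ⟨inferInstance, inferInstance, h X fun Y _ hY => (hX Y hY).2.2⟩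
  have h31 : (∀ (X : Type u) [TopologicalSpace X],
        ZeroDimensionalSp X → ProductivelyLindelofSp X → PowerfullyLindelofSp X) →
      (∀ (X : Type u) [TopologicalSpace X],
        ProductivelyQuasiLindelofSp X → PowerfullyQuasiLindelofSp X) := by
    intro h X _ hX
    by_cases hne : Nonempty X
    · obtain ⟨x⟩ := hne
      have hz := h (ZSp X)
        ⟨⟨⟨fun _ => true, x, fun _ _ _ => rfl⟩⟩, inferInstance, _, zsp_basis X, fun _ hb => hb⟩
        (by
          intro Y _ hY
          have := (quasi_iff _).1 (hX Y hY)
          obtain ⟨h1, h2, -⟩ := hY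
          exact ⟨inferInstance, inferInstance, (quasi_iff _).2 (zsp_lindelof X Y)⟩)
      have := (quasi_iff _).1 hz.2.2
      exact power_of_zsp X
    · have : IsEmpty X := not_nonempty_iff.1 hne
      exact (quasi_iff _).2 inferInstance
  refine ⟨⟨h12, fun h => h31 fun X _ _ => h X⟩, ⟨fun h X _ _ => h X, fun h => h12 (h31 h)⟩⟩
end

section
/- Assume the Continuum Hypothesis. Let X be a productively quasi-Lindelöf topological space such that every open cover of X^ω has a point-𝔠 refinement consisting of basic open sets. Then X is powerfully quasi-Lindelöf. -/
open Set Cardinal Topology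

universe u v

namespace S13

def bas {J : Type u} (s : Finset (J × Bool)) : Set (J → Bool) := {z | ∀ p ∈ s, z p.1 = p.2}

theorem isClopen_coord {J : Type u} (j : J) (b : Bool) : IsClopen {z : J → Bool | z j = b} := by
  have : {z : J → Bool | z j = b} = (fun z : J → Bool => z j) ⁻¹' {b} := rfl
  rw [this]
  exact (isClopen_discrete {b}).preimage (continuous_apply j)

theorem bas_eq {J : Type u} (s : Finset (J × Bool)) :
    bas s = ⋂ p ∈ s, {z : J → Bool | z p.1 = p.2} := by
  ext z; simp [bas]

theorem isClopen_bas {J : Type u} (s : Finset (J × Bool)) : IsClopen (bas s) := by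
  rw [bas_eq]
  exact isClopen_biInter_finset (fun p _ => isClopen_coord p.1 p.2)

theorem exists_bas {J : Type u} {U : Set (J → Bool)} (hU : IsOpen U) {z : J → Bool} (hz : z ∈ U) :
    ∃ s, z ∈ bas s ∧ bas s ⊆ U := by
  classical
  obtain ⟨I, v, hv, hI⟩ := isOpen_pi_iff.1 hU z hz
  refine ⟨I.image (fun j => (j, z j)), ?_, ?_⟩
  · intro p hp
    obtain ⟨j, hj, rfl⟩ := Finset.mem_image.1 hp
    rfl
  · intro w hw
    apply hI
    intro j hj
    have := hw (j, z j) (Finset.mem_image_of_mem _ hj)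
    simp only at this
    rw [this]
    exact (hv j hj).2

def CC {J : Type u} (A : Set (Finset (J × Bool))) : Set (J → Bool) := {z | ∀ s ∈ A, z ∉ bas s}

theorem isClosed_CC {J : Type u} (A : Set (Finset (J × Bool))) : IsClosed (CC A) := by
  have : CC A = ⋂ s ∈ A, (bas s)ᶜ := by ext z; simp [CC]
  rw [this]
  exact isClosed_biInter (fun s _ => (isClopen_bas s).isOpen.isClosed_compl)

def Sat {J : Type u} (B : Set J) (S : Set (J → Bool)) : Prop :=
  ∀ z w, (∀ j ∈ B, z j = w j) → z ∈ S → w ∈ S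

theorem sat_lindelof {J : Type u} {B : Set J} (hB : B.Countable) {S : Set (J → Bool)}
    (hS : Sat B S) : IsLindelof S := by
  classical
  apply isLindelof_of_countable_subcover
  intro ι U hU hSU
  have : Countable B := hB.to_subtype
  let r : (J → Bool) → (B → Bool) := fun z b => z b
  have hr : Continuous r := by fun_prop
  have hrc : IsClosedMap r := hr.isClosedMap
  have hfib : ∀ t : S, ∃ F : Finset ι, r ⁻¹' {r t} ⊆ ⋃ i ∈ F, U i := by
    intro t
    have hc : IsCompact (r ⁻¹' {r t}) := ((isClosed_singleton).preimage hr).isCompact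
    refine hc.elim_finite_subcover U hU ?_
    intro w hw
    apply hSU
    refine hS t w ?_ t.2
    intro j hj
    have := congrFun (show r w = r t from hw) ⟨j, hj⟩
    exact this.symm
  choose F hF using hfib
  let V : S → Set (B → Bool) := fun t => (r '' (⋃ i ∈ F t, U i)ᶜ)ᶜ
  have hV : ∀ t, IsOpen (V t) := by
    intro t
    refine (hrc _ ?_).isOpen_compl
    exact (isOpen_biUnion (fun i _ => hU i)).isClosed_compl
  have hL : IsLindelof (r '' S) := HereditarilyLindelofSpace.isLindelof _
  obtain ⟨T, hT, hTc⟩ := hL.elim_countable_subcover V hV (by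
    rintro _ ⟨t, ht, rfl⟩
    refine mem_iUnion.2 ⟨⟨t, ht⟩, ?_⟩
    rintro ⟨w, hw, hwt⟩
    exact hw (hF ⟨t, ht⟩ hwt))
  refine ⟨⋃ t ∈ T, (F t : Set ι), hT.biUnion (fun t _ => (F t).countable_toSet), ?_⟩
  intro z hz
  have := hTc (mem_image_of_mem r hz)
  simp only [mem_iUnion] at this
  obtain ⟨t, ht, hzt⟩ := this
  have : z ∈ ⋃ i ∈ F t, U i := by
    by_contra hcon
    exact hzt ⟨z, hcon, rfl⟩
  simp only [mem_iUnion] at this ⊢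
  obtain ⟨i, hi, hzi⟩ := this
  exact ⟨i, ⟨t, ht, hi⟩, hzi⟩

theorem quasi_iff (X : Type u) [TopologicalSpace X] : QuasiLindelofSp X ↔ LindelofSpace X := by
  constructor
  · intro h
    refine ⟨?_⟩
    apply isLindelof_of_countable_subcover
    intro ι U hU hc
    obtain ⟨V, hV, hVc, hVu⟩ := h (range U) (by rintro _ ⟨i, rfl⟩; exact hU i) (by
      rw [sUnion_range]; exact univ_subset_iff.1 hc)
    obtain ⟨T, hT, hTc⟩ : ∃ T : Set ι, T.Countable ∧ U '' T = V := by
      have : ∀ v : V, ∃ i, U i = v := fun v => hV v.2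
      choose g hg using this
      have := hVc.to_subtype
      refine ⟨range g, countable_range g, ?_⟩
      ext v
      constructor
      · rintro ⟨_, ⟨w, rfl⟩, rfl⟩
        rw [hg]; exact w.2
      · intro hv
        exact ⟨g ⟨v, hv⟩, ⟨_, rfl⟩, hg _⟩
    refine ⟨T, hT, ?_⟩
    rw [← hVu, ← hTc, sUnion_image]
  · intro h 𝒰 hU hc
    obtain ⟨b, hb, hbc, hbu⟩ := h.1.elim_countable_subcover_image (b := 𝒰) (c := id) hU (by
      rw [← hc, sUnion_eq_biUnion]; rfl)
    refine ⟨b, hb, hbc, ?_⟩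
    rw [sUnion_eq_biUnion]
    exact univ_subset_iff.1 hbu

structure GJ (J : Type u) [LinearOrder J] : Prop where
  cnt : ∀ j : J, (Iio j).Countable
  unc : ¬ (univ : Set J).Countable
  card : #J ≤ Cardinal.continuum
  surj : ∀ (α : Type u), Nonempty α → #α ≤ Cardinal.continuum → ∃ f : J → α, Function.Surjective f

theorem GJ.bdd {J : Type u} [LinearOrder J] (hJ : GJ J) {S : Set J} (hS : S.Countable) :
    ∃ j, ∀ i ∈ S, i < j := by
  by_contra hcon
  push Not at hcon
  apply hJ.unc
  have h1 : (⋃ i ∈ S, (Iio i ∪ {i})).Countable :=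
    hS.biUnion (fun i _ => (hJ.cnt i).union (countable_singleton i))
  refine h1.mono ?_
  intro j _
  obtain ⟨i, hi, hij⟩ := hcon j
  simp only [mem_iUnion]
  refine ⟨i, hi, ?_⟩
  rcases hij.lt_or_eq with h | h
  · exact Or.inl h
  · exact Or.inr h

open Classical in
noncomputable def e {J X : Type u} (O : J → Set X) (x : X) : J → Bool := fun j => decide (x ∈ O j)

theorem e_true {J X : Type u} (O : J → Set X) (x : X) (j : J) : e O x j = true ↔ x ∈ O j := by
  simp [e]

theorem e_false {J X : Type u} (O : J → Set X) (x : X) (j : J) : e O x j = false ↔ x ∉ O j := by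
  simp [e]

def Pinf {J X : Type u} (O : J → Set X) : Set (J → Bool) :=
  {z | ∀ x, ∃ ξ, x ∈ O ξ ∧ z ξ = false}

def P {J X : Type u} [LinearOrder J] (O : J → Set X) (γ : J) : Set (J → Bool) :=
  {z | ∀ x, ∃ ξ, ξ < γ ∧ x ∈ O ξ ∧ z ξ = false}

theorem e_notMem {J X : Type u} (O : J → Set X) (x : X) : e O x ∉ Pinf O := by
  intro h
  obtain ⟨ξ, h1, h2⟩ := h x
  exact (e_false O x ξ).1 h2 h1

theorem P_sub {J X : Type u} [LinearOrder J] (O : J → Set X) (γ : J) : P O γ ⊆ Pinf O := by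
  intro z hz x
  obtain ⟨ξ, _, h⟩ := hz x
  exact ⟨ξ, h⟩

theorem P_mono {J X : Type u} [LinearOrder J] (O : J → Set X) {γ δ : J} (h : γ ≤ δ) :
    P O γ ⊆ P O δ := by
  intro z hz x
  obtain ⟨ξ, h1, h2⟩ := hz x
  exact ⟨ξ, h1.trans_le h, h2⟩

theorem P_sat {J X : Type u} [LinearOrder J] (O : J → Set X) (γ : J) :
    Sat (Iio γ) (P O γ) := by
  intro z w h hz x
  obtain ⟨ξ, h1, h2, h3⟩ := hz x
  exact ⟨ξ, h1, h2, by rw [← h ξ h1]; exact h3⟩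

theorem lindelof_of_prod {X : Type u} [TopologicalSpace X] (h : ProductivelyQuasiLindelofSp X) :
    LindelofSpace X := by
  have h1 : QuasiLindelofSp (X × PUnit.{u+1}) := by
    apply h
    refine ⟨inferInstance, inferInstance, ?_⟩
    rw [quasi_iff]
    infer_instance
  rw [quasi_iff] at h1
  have := h1.1.image (continuous_fst : Continuous (Prod.fst : X × PUnit.{u+1} → X))
  rw [image_univ, Prod.range_fst] at this
  exact ⟨this⟩

theorem Pinf_eq {J X : Type u} [LinearOrder J] (hJ : GJ J) [TopologicalSpace X]
    (hX : LindelofSpace X) (O : J → Set X) (hO : ∀ j, IsOpen (O j)) {z} (hz : z ∈ Pinf O) :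
    ∃ γ, z ∈ P O γ := by
  obtain ⟨r, hr, hc⟩ := hX.1.elim_countable_subcover
    (fun ξ : {ξ // z ξ = false} => O ξ) (fun ξ => hO ξ) (by
      intro x _
      obtain ⟨ξ, h1, h2⟩ := hz x
      exact mem_iUnion.2 ⟨⟨ξ, h2⟩, h1⟩)
  obtain ⟨γ, hγ⟩ := hJ.bdd (hr.image Subtype.val)
  refine ⟨γ, fun x => ?_⟩
  have := hc (mem_univ x)
  simp only [mem_iUnion] at this
  obtain ⟨ξ, h1, h2⟩ := this
  exact ⟨ξ, hγ _ ⟨ξ, h1, rfl⟩, h2, ξ.2⟩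

open Classical in
noncomputable def dl {J : Type u} (j : J) : J → Bool := fun i => decide (i = j)

theorem engine {J X : Type u} [LinearOrder J] (hJ : GJ J) [TopologicalSpace X]
    (hprod : ProductivelyQuasiLindelofSp X) (O : J → Set X) (hO : ∀ j, IsOpen (O j))
    (T : Set (J → Bool)) (hTP : T ⊆ Pinf O) (hT : IsLindelof T) (x : J → X)
    (hx : ∀ V, IsOpen V → T ⊆ V → {j | e O (x j) ∉ V}.Countable) : False := by
  classical
  let Y : Set ((J → Bool) × (J → Bool)) :=
    {y | (y.1 ∈ T ∧ y.2 = fun _ => false) ∨ ∃ j, y = (e O (x j), dl j)}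
  have hY : IsLindelof Y := by
    apply isLindelof_of_countable_subcover
    intro ι U hU hYU
    let f : (J → Bool) → (J → Bool) × (J → Bool) := fun z => (z, fun _ => false)
    have hf : Continuous f := by fun_prop
    have hT0 : IsLindelof (f '' T) := hT.image hf
    obtain ⟨r0, hr0, hc0⟩ := hT0.elim_countable_subcover U hU (by
      rintro _ ⟨t, ht, rfl⟩
      exact hYU (Or.inl ⟨ht, rfl⟩))
    set W := ⋃ i ∈ r0, U i with hW
    have hWo : IsOpen W := isOpen_biUnion (fun i _ => hU i)
    have h1 : ∀ t : T, ∃ V : Set (J → Bool), ∃ F : Finset J, IsOpen V ∧ t.1 ∈ V ∧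
        ∀ z ∈ V, ∀ w : J → Bool, (∀ j ∈ F, w j = false) → (z, w) ∈ W := by
      intro t
      obtain ⟨V, V', hV, hV', htV, htV', hsub⟩ :=
        isOpen_prod_iff.1 hWo t.1 (fun _ => false) (hc0 ⟨t.1, t.2, rfl⟩)
      obtain ⟨s, hs, hsV⟩ := exists_bas hV' htV'
      refine ⟨V, s.image Prod.fst, hV, htV, ?_⟩
      intro z hz w hw
      apply hsub
      refine ⟨hz, hsV ?_⟩
      intro p hp
      change w p.1 = p.2
      rw [hw p.1 (Finset.mem_image_of_mem _ hp)]
      exact hs p hp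
    choose V F hV htV hVF using h1
    obtain ⟨D, hD, hTD⟩ := hT.elim_countable_subcover V hV
      (fun t ht => mem_iUnion.2 ⟨⟨t, ht⟩, htV _⟩)
    have hb1 := hx (⋃ t ∈ D, V t) (isOpen_biUnion fun t _ => hV t) hTD
    have hb2 : (⋃ t ∈ D, (F t : Set J)).Countable :=
      hD.biUnion (fun t _ => (F t).countable_toSet)
    have hb := hb1.union hb2
    have hcl : IsLindelof ((fun j => (e O (x j), dl j)) ''
      ({j | e O (x j) ∉ ⋃ t ∈ D, V t} ∪ ⋃ t ∈ D, (F t : Set J))) := (hb.image _).isLindelof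
    obtain ⟨r1, hr1, hc1⟩ := hcl.elim_countable_subcover U hU (by
      rintro _ ⟨j, _, rfl⟩
      exact hYU (Or.inr ⟨j, rfl⟩))
    refine ⟨r0 ∪ r1, hr0.union hr1, ?_⟩
    rw [biUnion_union]
    rintro y (⟨hy1, hy2⟩ | ⟨j, rfl⟩)
    · left
      apply hc0
      refine ⟨y.1, hy1, ?_⟩
      simp only [f, ← hy2]
    · by_cases hj : j ∈ ({j | e O (x j) ∉ ⋃ t ∈ D, V t} ∪ ⋃ t ∈ D, (F t : Set J))
      · right
        exact hc1 ⟨j, hj, rfl⟩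
      · left
        simp only [mem_union, mem_ofPred_eq, not_or, not_not] at hj
        obtain ⟨hj1, hj2⟩ := hj
        simp only [mem_iUnion] at hj1 hj2
        obtain ⟨t, ht, hjt⟩ := hj1
        refine hVF t _ hjt _ ?_
        intro i hi
        simp only [dl, decide_eq_false_iff_not]
        rintro rfl
        exact hj2 ⟨t, ht, hi⟩
  have hEL : EngLindelofSp Y := by
    refine ⟨inferInstance, inferInstance, ?_⟩
    rw [quasi_iff]
    exact isLindelof_iff_lindelofSpace.1 hY
  have hXY := hprod Y hEL
  rw [quasi_iff] at hXY
  let U : J ⊕ J → Set (X × Y) := Sum.elim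
    (fun ξ => {q | q.1 ∈ O ξ ∧ q.2.1.1 ξ = false}) (fun j => {q | q.2.1.2 j = true})
  have hU : ∀ i, IsOpen (U i) := by
    rintro (ξ | j)
    · refine ((hO ξ).preimage continuous_fst).inter ?_
      exact (isClopen_coord ξ false).isOpen.preimage
        (continuous_fst.comp (continuous_subtype_val.comp continuous_snd))
    · exact (isClopen_coord j true).isOpen.preimage
        (continuous_snd.comp (continuous_subtype_val.comp continuous_snd))
  obtain ⟨r, hr, hc⟩ := hXY.1.elim_countable_subcover U hU (by
    rintro ⟨a, ⟨y, hy⟩⟩ _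
    rcases hy with ⟨hy1, hy2⟩ | ⟨j, rfl⟩
    · obtain ⟨ξ, h1, h2⟩ := hTP hy1 a
      exact mem_iUnion.2 ⟨Sum.inl ξ, h1, h2⟩
    · refine mem_iUnion.2 ⟨Sum.inr j, ?_⟩
      simp [U, dl])
  have hrc : (Sum.inr ⁻¹' r : Set J).Countable := hr.preimage Sum.inr_injective
  obtain ⟨j, hj⟩ := hJ.bdd hrc
  have := hc (mem_univ (x j, ⟨(e O (x j), dl j), Or.inr ⟨j, rfl⟩⟩))
  simp only [mem_iUnion] at this
  obtain ⟨(ξ | i), hi, hm⟩ := this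
  · exact (e_false O (x j) ξ).1 hm.2 hm.1
  · have h3 : i = j := by simpa [U, dl] using hm
    exact lt_irrefl _ (h3 ▸ hj i hi)

theorem GJ.enum {J : Type u} [LinearOrder J] (hJ : GJ J) (𝒮 : Set (Set (Finset (J × Bool))))
    (h1 : ∀ A ∈ 𝒮, A.Countable) (hne : 𝒮.Nonempty) :
    ∃ c : J → Set (Finset (J × Bool)), range c = 𝒮 := by
  classical
  have hinf : Infinite J := by
    by_contra h
    rw [not_infinite_iff_finite] at h
    exact hJ.unc (Set.toFinite _).countable
  have hF : #(Finset (J × Bool)) ≤ Cardinal.continuum := by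
    rw [Cardinal.mk_finset_of_infinite, Cardinal.mk_prod]
    simp only [Cardinal.lift_uzero, Cardinal.mk_bool, Cardinal.lift_ofNat]
    exact (Cardinal.mul_le_max_of_aleph0_le_left (Cardinal.aleph0_le_mk J)).trans
      (max_le hJ.card (Cardinal.nat_lt_continuum 2).le)
  have hS : #𝒮 ≤ Cardinal.continuum := by
    have h2 : #𝒮 ≤ #{t : Set (Finset (J × Bool)) // #t ≤ ℵ₀} := by
      refine Cardinal.mk_le_of_injective
        (f := fun A => ⟨A.1, Cardinal.le_aleph0_iff_set_countable.2 (h1 A.1 A.2)⟩) ?_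
      intro A B hAB
      exact Subtype.ext (Subtype.mk.inj hAB)
    refine h2.trans ((Cardinal.mk_bounded_set_le _ _).trans ?_)
    refine (Cardinal.power_le_power_right (max_le hF Cardinal.aleph0_le_continuum)).trans ?_
    rw [Cardinal.continuum_power_aleph0]
  have : Nonempty 𝒮 := hne.to_subtype
  obtain ⟨f, hf⟩ := hJ.surj 𝒮 this hS
  refine ⟨fun j => f j, ?_⟩
  rw [show (fun j => (f j : Set (Finset (J × Bool)))) = Subtype.val ∘ f from rfl, range_comp,
    hf.range_eq, image_univ, Subtype.range_coe]

theorem exists_CC {J : Type u} {S V : Set (J → Bool)} (hS : IsLindelof S) (hV : IsOpen V)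
    (hSV : S ⊆ V) : ∃ A : Set (Finset (J × Bool)), A.Countable ∧ CC A ⊆ Sᶜ ∧ Vᶜ ⊆ CC A := by
  obtain ⟨A, hA1, hA2, hA3⟩ := hS.elim_countable_subcover_image (b := {s | bas s ⊆ V})
    (c := fun s => bas s) (fun s _ => (isClopen_bas s).isOpen) (by
      intro z hz
      obtain ⟨s, h1, h2⟩ := exists_bas hV (hSV hz)
      simp only [mem_iUnion]
      exact ⟨s, h2, h1⟩)
  refine ⟨A, hA2, ?_, ?_⟩
  · intro z hz hzS
    have := hA3 hzS
    simp only [mem_iUnion] at this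
    obtain ⟨s, hs, hzs⟩ := this
    exact hz s hs hzs
  · intro z hz s hs hzs
    exact hz (hA1 hs hzs)

theorem sigma_compact {J X : Type u} [LinearOrder J] (hJ : GJ J) [TopologicalSpace X]
    (hprod : ProductivelyQuasiLindelofSp X) (O : J → Set X) (hO : ∀ j, IsOpen (O j)) (γ : J) :
    ∃ 𝒦 : Set (Set (J → Bool)), 𝒦.Countable ∧ (∀ K ∈ 𝒦, IsClosed K ∧ Sat (Iio γ) K ∧
      K ⊆ (P O γ)ᶜ) ∧ (P O γ)ᶜ ⊆ ⋃₀ 𝒦 := by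
  have hPL : IsLindelof (P O γ) := sat_lindelof (hJ.cnt γ) (P_sat O γ)
  obtain ⟨c, hc⟩ := hJ.enum {A | A.Countable ∧ CC A ⊆ (P O γ)ᶜ} (fun A hA => hA.1) (by
    obtain ⟨A, h1, h2, _⟩ := exists_CC hPL isOpen_univ (subset_univ _)
    exact ⟨A, h1, h2⟩)
  by_cases hcase : ∃ j, ∀ x, ∃ i < j, e O x ∈ CC (c i)
  · obtain ⟨j, hj⟩ := hcase
    refine ⟨(fun i => {z | ∃ w ∈ CC (c i), ∀ ξ, ξ < γ → w ξ = true → z ξ = true}) '' Iio j,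
      (hJ.cnt j).image _, ?_, ?_⟩
    · rintro _ ⟨i, hi, rfl⟩
      refine ⟨?_, ?_, ?_⟩
      · have hcl : IsClosed {q : (J → Bool) × (J → Bool) | q.1 ∈ CC (c i) ∧
            ∀ ξ, ξ < γ → q.1 ξ = true → q.2 ξ = true} := by
          refine ((isClosed_CC (c i)).preimage continuous_fst).inter ?_
          have : {q : (J → Bool) × (J → Bool) | ∀ ξ, ξ < γ → q.1 ξ = true → q.2 ξ = true}
            = ⋂ ξ, ⋂ (_ : ξ < γ), ({q : (J → Bool) × (J → Bool) | q.1 ξ = false} ∪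
                {q : (J → Bool) × (J → Bool) | q.2 ξ = true}) := by
            ext q
            simp only [mem_iInter, mem_union, mem_ofPred_eq]
            refine forall_congr' fun ξ => forall_congr' fun _ => ?_
            cases q.1 ξ <;> simp
          change IsClosed {q : (J → Bool) × (J → Bool) | ∀ ξ, ξ < γ → q.1 ξ = true → q.2 ξ = true}
          rw [this]
          refine isClosed_iInter fun ξ => isClosed_iInter fun _ => IsClosed.union ?_ ?_
          · exact (isClopen_coord ξ false).isClosed.preimage continuous_fst
          · exact (isClopen_coord ξ true).isClosed.preimage continuous_snd
        have := isClosedMap_snd_of_compactSpace _ hcl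
        convert this using 1
        ext z
        simp
      · rintro z z' hzz ⟨w, hw, h⟩
        refine ⟨w, hw, fun ξ hξ hwξ => ?_⟩
        rw [← hzz ξ hξ]
        exact h ξ hξ hwξ
      · rintro z ⟨w, hw, h⟩ hz
        have hci : c i ∈ range c := ⟨i, rfl⟩
        rw [hc] at hci
        refine hci.2 hw ?_
        intro x
        obtain ⟨ξ, h1, h2, h3⟩ := hz x
        refine ⟨ξ, h1, h2, ?_⟩
        by_contra hcon
        rw [Bool.not_eq_false] at hcon
        rw [h ξ h1 hcon] at h3
        exact Bool.noConfusion h3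
    · intro z hz
      have : ∃ x, ∀ ξ, ξ < γ → x ∈ O ξ → z ξ = true := by
        by_contra hcon
        push Not at hcon
        apply hz
        intro x
        obtain ⟨ξ, h1, h2, h3⟩ := hcon x
        exact ⟨ξ, h1, h2, by simpa using h3⟩
      obtain ⟨x, hx⟩ := this
      obtain ⟨i, hi, hxi⟩ := hj x
      exact ⟨_, ⟨i, hi, rfl⟩, e O x, hxi, fun ξ hξ h => hx ξ hξ ((e_true O x ξ).1 h)⟩
  · exfalso
    push Not at hcase
    choose x hx using hcase
    refine engine hJ hprod O hO (P O γ) (P_sub O γ) hPL x ?_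
    intro V hV hPV
    obtain ⟨A, h1, h2, h3⟩ := exists_CC hPL hV hPV
    have hA : A ∈ range c := by rw [hc]; exact ⟨h1, h2⟩
    obtain ⟨i, rfl⟩ := hA
    obtain ⟨j', hj'⟩ := hJ.bdd (countable_singleton i)
    refine (hJ.cnt j').mono ?_
    intro j hj
    by_contra hcon
    exact hx j i ((hj' i rfl).trans_le (not_lt.1 hcon)) (h3 hj)

def sp {J : Type u} (A : Set (Finset (J × Bool))) : Set J := {j | ∃ s ∈ A, ∃ p ∈ s, p.1 = j}

theorem sp_countable {J : Type u} {A : Set (Finset (J × Bool))} (hA : A.Countable) :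
    (sp A).Countable := by
  have : sp A = ⋃ s ∈ A, Prod.fst '' (s : Set (J × Bool)) := by
    ext j; simp [sp]
  rw [this]
  exact hA.biUnion (fun s _ => s.countable_toSet.image _)

theorem Sat.mono {J : Type u} {B B' : Set J} {S : Set (J → Bool)} (h : Sat B S) (hB : B ⊆ B') :
    Sat B' S := fun z w hzw hz => h z w (fun j hj => hzw j (hB hj)) hz

theorem Sat.compl {J : Type u} {B : Set J} {S : Set (J → Bool)} (h : Sat B S) :
    Sat B Sᶜ := fun z w hzw hz hw => hz (h w z (fun j hj => (hzw j hj).symm) hw)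

theorem sat_CC {J : Type u} (A : Set (Finset (J × Bool))) : Sat (sp A) (CC A) := by
  intro z w hzw hz s hs hws
  apply hz s hs
  intro p hp
  rw [hzw p.1 ⟨s, hs, p, hp, rfl⟩]
  exact hws p hp

def Glt {J X : Type u} [LinearOrder J] (O : J → Set X) (c : J → Set (Finset (J × Bool))) (ξ : J) :
    Set (J → Bool) := {z | ∃ i < ξ, z ∈ CC (c i) ∧ z ∉ P O i}

theorem Glt_mono {J X : Type u} [LinearOrder J] (O : J → Set X)
    (c : J → Set (Finset (J × Bool))) {ξ η : J} (h : ξ ≤ η) : Glt O c ξ ⊆ Glt O c η := by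
  rintro z ⟨i, hi, h1⟩
  exact ⟨i, hi.trans_le h, h1⟩

theorem Glt_lindelof {J X : Type u} [LinearOrder J] (hJ : GJ J) (O : J → Set X)
    (c : J → Set (Finset (J × Bool))) (hc : ∀ i, (c i).Countable) (ξ : J) :
    IsLindelof (Glt O c ξ)ᶜ := by
  have hS : Sat (⋃ i ∈ Iio ξ, (sp (c i) ∪ Iio i)) (Glt O c ξ) := by
    rintro z w hzw ⟨i, hi, h1, h2⟩
    have hsub : sp (c i) ∪ Iio i ⊆ ⋃ i ∈ Iio ξ, (sp (c i) ∪ Iio i) :=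
      subset_biUnion_of_mem (u := fun i => sp (c i) ∪ Iio i) hi
    refine ⟨i, hi, ?_, ?_⟩
    · exact ((sat_CC (c i)).mono (subset_union_left.trans hsub)) z w hzw h1
    · exact ((P_sat O i).compl.mono (subset_union_right.trans hsub)) z w hzw h2
  refine sat_lindelof ?_ hS.compl
  exact (hJ.cnt ξ).biUnion (fun i _ => (sp_countable (hc i)).union (hJ.cnt i))

theorem countable_fin {J : Type u} {B : Set J} (hB : B.Countable) :
    {s : Finset (J × Bool) | ∀ p ∈ s, p.1 ∈ B}.Countable := by
  have hcc : (B ×ˢ (univ : Set Bool)).Countable := hB.prod countable_univ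
  have h2 := Set.countable_ofPred_finite_subset hcc
  refine (h2.preimage_of_injOn (f := fun s : Finset (J × Bool) => (s : Set (J × Bool)))
    (Finset.coe_injective.injOn)).mono ?_
  intro s hs
  refine ⟨s.finite_toSet, ?_⟩
  intro p hp
  exact ⟨hs p hp, mem_univ _⟩

theorem closing {J : Type u} [LinearOrder J] [WellFoundedLT J] (hJ : GJ J)
    (g : Finset (J × Bool) → J) (c : J → Set (Finset (J × Bool))) (hc : ∀ i, (c i).Countable) :
    ∃ γ : J, (∀ s : Finset (J × Bool), (∀ p ∈ s, p.1 < γ) → g s < γ) ∧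
      ∀ i < γ, sp (c i) ⊆ Iio γ := by
  classical
  have hstep : ∀ γ : J, ∃ δ, γ < δ ∧ (∀ s : Finset (J × Bool), (∀ p ∈ s, p.1 < γ) → g s < δ) ∧
      ∀ i < γ, sp (c i) ⊆ Iio δ := by
    intro γ
    have h1 : {s : Finset (J × Bool) | ∀ p ∈ s, p.1 < γ}.Countable := countable_fin (hJ.cnt γ)
    have h2 : (({γ} : Set J) ∪ g '' {s : Finset (J × Bool) | ∀ p ∈ s, p.1 < γ} ∪
      ⋃ i ∈ Iio γ, sp (c i)).Countable :=
      ((countable_singleton γ).union (h1.image g)).union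
        ((hJ.cnt γ).biUnion fun i _ => sp_countable (hc i))
    obtain ⟨δ, hδ⟩ := hJ.bdd h2
    refine ⟨δ, hδ γ (Or.inl (Or.inl rfl)), fun s hs => hδ _ (Or.inl (Or.inr ⟨s, hs, rfl⟩)), ?_⟩
    intro i hi j hj
    refine hδ j (Or.inr ?_)
    simp only [mem_iUnion]
    exact ⟨i, hi, hj⟩
  choose h hh1 hh2 hh3 using hstep
  obtain ⟨j0, _⟩ := hJ.bdd countable_empty
  let q : ℕ → J := fun n => h^[n] j0
  have hq : ∀ n, q (n + 1) = h (q n) := fun n => Function.iterate_succ_apply' h n j0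
  have hmono : StrictMono q := strictMono_nat_of_lt_succ (fun n => by rw [hq]; exact hh1 _)
  let S : Set J := {δ | ∀ n, q n < δ}
  have hSne : S.Nonempty := by
    obtain ⟨j, hj⟩ := hJ.bdd (countable_range q)
    exact ⟨j, fun n => hj _ ⟨n, rfl⟩⟩
  have wf : WellFounded ((· < ·) : J → J → Prop) := wellFounded_lt
  let γ := wf.min S hSne
  have hγ : ∀ n, q n < γ := wf.min_mem S hSne
  have hγ2 : ∀ ξ < γ, ∃ n, ξ < q n := by
    intro ξ hξ
    by_contra hcon
    push Not at hcon
    have : ξ ∈ S := fun n => (hmono (Nat.lt_succ_self n)).trans_le (hcon (n + 1))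
    exact wf.not_lt_min S this hξ
  refine ⟨γ, ?_, ?_⟩
  · intro s hs
    have : ∃ n, ∀ p ∈ s, p.1 < q n := by
      choose! n hn using fun p (hp : p ∈ s) => hγ2 p.1 (hs p hp)
      refine ⟨s.sup n, fun p hp => (hn p hp).trans_le (hmono.monotone (Finset.le_sup hp))⟩
    obtain ⟨n, hn⟩ := this
    refine (hh2 _ s hn).trans ?_
    rw [← hq]
    exact hγ _
  · intro i hi j hj
    obtain ⟨n, hn⟩ := hγ2 i hi
    have := hh3 _ i hn hj
    rw [← hq] at this
    exact lt_trans this (hγ _)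

theorem key {J X : Type u} [LinearOrder J] [WellFoundedLT J] (hJ : GJ J) [TopologicalSpace X]
    (hprod : ProductivelyQuasiLindelofSp X) (O : J → Set X) (hO : ∀ j, IsOpen (O j))
    (c : J → Set (Finset (J × Bool))) (hc : ∀ i, (c i).Countable)
    (hK : ∀ K, IsCompact K → K ⊆ (Pinf O)ᶜ → ∃ i, K ⊆ CC (c i))
    (C : Set (J → Bool)) (hC : IsClosed C) (hCE : ∀ z ∈ C, ∃ i, z ∈ CC (c i) ∧ z ∉ P O i) :
    ∃ ξ, C ⊆ Glt O c ξ := by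
  classical
  by_contra hcon
  have hX := lindelof_of_prod hprod
  let small : Set (Finset (J × Bool)) := {s | ∃ ξ, bas s ∩ C ⊆ Glt O c ξ}
  let Cm : Set (J → Bool) := C ∩ CC small
  have hCm : IsClosed Cm := hC.inter (isClosed_CC _)
  have fact1 : ∀ s ξ, bas s ∩ Cm ⊆ Glt O c ξ → s ∈ small := by
    intro s ξ hs
    have hL : IsLindelof ((Glt O c ξ)ᶜ ∩ (bas s ∩ C)) :=
      (Glt_lindelof hJ O c hc ξ).inter_right ((isClopen_bas s).isClosed.inter hC)
    obtain ⟨A, hA1, hA2, hA3⟩ := hL.elim_countable_subcover_image (b := small)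
      (c := fun s => bas s) (fun s _ => (isClopen_bas s).isOpen) (by
        rintro z ⟨hz1, hz2, hz3⟩
        by_contra hz4
        apply hz1
        apply hs
        refine ⟨hz2, hz3, ?_⟩
        intro t ht hzt
        apply hz4
        simp only [mem_iUnion]
        exact ⟨t, ht, hzt⟩)
    have : Nonempty J := ⟨ξ⟩
    choose! η hη using fun t (ht : t ∈ small) => ht
    obtain ⟨δ, hδ⟩ := hJ.bdd ((hA2.image η).union (countable_singleton ξ))
    refine ⟨δ, ?_⟩
    rintro z ⟨hz1, hz2⟩
    by_cases hzG : z ∈ Glt O c ξ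
    · exact Glt_mono O c (hδ ξ (Or.inr rfl)).le hzG
    · have := hA3 ⟨hzG, hz1, hz2⟩
      simp only [mem_iUnion] at this
      obtain ⟨t, ht, hzt⟩ := this
      exact Glt_mono O c (hδ _ (Or.inl ⟨t, ht, rfl⟩)).le (hη t (hA1 ht) ⟨hzt, hz2⟩)
  have fact1' : ∀ s ξ, bas s ∩ Cm ⊆ Glt O c ξ → ∀ z ∈ Cm, z ∉ bas s :=
    fun s ξ h z hz => hz.2 s (fact1 s ξ h)
  have hne : Cm.Nonempty := by
    by_contra hemp
    rw [not_nonempty_iff_eq_empty] at hemp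
    obtain ⟨j0, _⟩ := hJ.bdd countable_empty
    obtain ⟨ξ, hξ⟩ := fact1 ∅ j0 (by rw [hemp]; simp)
    exact hcon ⟨ξ, fun z hz => hξ ⟨by simp [bas], hz⟩⟩
  have fact2 : ∀ s, (bas s ∩ Cm).Nonempty → ∃ γ, (bas s ∩ Cm ∩ P O γ).Nonempty := by
    intro s hs
    by_contra hcon2
    push Not at hcon2
    have hcomp : IsCompact (bas s ∩ Cm) := ((isClopen_bas s).isClosed.inter hCm).isCompact
    have hdis : ∀ γ, ∀ z ∈ bas s ∩ Cm, z ∉ P O γ := by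
      intro γ z hz hzP
      have : z ∈ bas s ∩ Cm ∩ P O γ := ⟨hz, hzP⟩
      rw [hcon2 γ] at this
      exact this
    obtain ⟨i, hi⟩ := hK _ hcomp (by
      intro z hz hzP
      obtain ⟨γ, hγ⟩ := Pinf_eq hJ hX O hO hzP
      exact hdis γ z hz hγ)
    obtain ⟨η, hη⟩ := hJ.bdd (countable_singleton i)
    obtain ⟨z, hz⟩ := hs
    exact fact1' s η (fun w hw => ⟨i, hη i rfl, hi hw, hdis i w hw⟩) z hz.2 hz.1
  obtain ⟨j0, _⟩ := hJ.bdd countable_empty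
  have fact3 : ∀ s, ∃ γ, (bas s ∩ Cm).Nonempty → (bas s ∩ Cm ∩ P O γ).Nonempty := by
    intro s
    by_cases h : (bas s ∩ Cm).Nonempty
    · obtain ⟨γ, hγ⟩ := fact2 s h
      exact ⟨γ, fun _ => hγ⟩
    · exact ⟨j0, fun h' => absurd h' h⟩
  choose g hg using fact3
  obtain ⟨γ, hγ1, hγ2⟩ := closing hJ g c hc
  choose 𝒦 hK1 hK2 hK3 using sigma_compact hJ hprod O hO
  let 𝒢 : Set (Set (J → Bool)) := (⋃ i ∈ Iio γ, (fun K => CC (c i) ∩ K) '' 𝒦 i) ∪ 𝒦 γ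
  have hGc : 𝒢.Countable :=
    ((hJ.cnt γ).biUnion fun i _ => (hK1 i).image _).union (hK1 γ)
  have hGcases : ∀ F ∈ 𝒢, (∃ i < γ, ∃ K ∈ 𝒦 i, F = CC (c i) ∩ K) ∨ F ∈ 𝒦 γ := by
    rintro F (hF | hF)
    · simp only [mem_iUnion] at hF
      obtain ⟨i, hi, K, hK, rfl⟩ := hF
      exact Or.inl ⟨i, hi, K, hK, rfl⟩
    · exact Or.inr hF
  have hGcl : ∀ F ∈ 𝒢, IsClosed F := by
    intro F hF
    rcases hGcases F hF with ⟨i, hi, K, hK, rfl⟩ | hF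
    · exact (isClosed_CC _).inter (hK2 i K hK).1
    · exact (hK2 γ F hF).1
  have hGsat : ∀ F ∈ 𝒢, Sat (Iio γ) F := by
    intro F hF
    rcases hGcases F hF with ⟨i, hi, K, hK, rfl⟩ | hF
    · intro z w hzw hz
      refine ⟨((sat_CC (c i)).mono (hγ2 i hi)) z w hzw hz.1, ?_⟩
      exact ((hK2 i K hK).2.1.mono (Iio_subset_Iio hi.le)) z w hzw hz.2
    · exact (hK2 γ F hF).2.1
  have hGcov : ∀ z ∈ Cm, ∃ F ∈ 𝒢, z ∈ F := by
    intro z hz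
    obtain ⟨i, hi1, hi2⟩ := hCE z hz.1
    by_cases hiγ : i < γ
    · obtain ⟨K, hK, hzK⟩ := hK3 i hi2
      refine ⟨CC (c i) ∩ K, Or.inl ?_, hi1, hzK⟩
      simp only [mem_iUnion]
      exact ⟨i, hiγ, K, hK, rfl⟩
    · obtain ⟨K, hK, hzK⟩ := hK3 γ (fun h => hi2 (P_mono O (not_lt.1 hiγ) h))
      exact ⟨K, Or.inr hK, hzK⟩
  let r : (J → Bool) → (J → Bool) := fun z j => if j < γ then z j else false
  have hr : Continuous r := by
    refine continuous_pi fun j => ?_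
    by_cases hj : j < γ
    · simp only [r, hj, if_true]; exact continuous_apply j
    · simp only [r, hj, if_false]; exact continuous_const
  have hr1 : ∀ z j, j < γ → r z j = z j := fun z j hj => if_pos hj
  have hr2 : ∀ z j, ¬ j < γ → r z j = false := fun z j hj => if_neg hj
  have hRc : IsCompact (r '' Cm) := hCm.isCompact.image hr
  have : CompactSpace (r '' Cm) := isCompact_iff_compactSpace.1 hRc
  have : Nonempty (r '' Cm) := (hne.image r).to_subtype
  have : Countable 𝒢 := hGc.to_subtype
  obtain ⟨⟨F, hF⟩, ⟨⟨ρ, hρ⟩, hρF⟩⟩ := nonempty_interior_of_iUnion_of_closed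
    (X := (r '' Cm)) (f := fun F : 𝒢 => Subtype.val ⁻¹' F.1)
    (fun F => (hGcl F.1 F.2).preimage continuous_subtype_val) (by
      rw [eq_univ_iff_forall]
      rintro ⟨_, z, hz, rfl⟩
      obtain ⟨F, hF, hzF⟩ := hGcov z hz
      refine mem_iUnion.2 ⟨⟨F, hF⟩, ?_⟩
      exact hGsat F hF z (r z) (fun j hj => (hr1 z j hj).symm) hzF)
  obtain ⟨U, hU, hUi⟩ := isOpen_induced_iff.1
    (isOpen_interior (s := (Subtype.val ⁻¹' F : Set (r '' Cm))))
  have hρU : ρ ∈ U := by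
    have : (⟨ρ, hρ⟩ : r '' Cm) ∈ Subtype.val ⁻¹' U := by rw [hUi]; exact hρF
    exact this
  obtain ⟨s, hs1, hs2⟩ := exists_bas hU hρU
  have hsF : ∀ z ∈ Cm, r z ∈ bas s → r z ∈ F := by
    intro z hz hzs
    have : (⟨r z, z, hz, rfl⟩ : r '' Cm) ∈ Subtype.val ⁻¹' U := hs2 hzs
    rw [hUi] at this
    exact interior_subset (s := (Subtype.val ⁻¹' F : Set (r '' Cm))) this
  obtain ⟨z0, hz0, rfl⟩ := hρ
  let s' := s.filter (fun p => p.1 < γ)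
  have hs'γ : ∀ p ∈ s', p.1 < γ := fun p hp => (Finset.mem_filter.1 hp).2
  have hz0s : z0 ∈ bas s' := by
    intro p hp
    rw [← hr1 z0 p.1 (hs'γ p hp)]
    exact hs1 p (Finset.mem_filter.1 hp).1
  have hall : ∀ z ∈ bas s' ∩ Cm, z ∈ F := by
    rintro z ⟨hz1, hz2⟩
    refine hGsat F hF (r z) z (fun j hj => hr1 z j hj) (hsF z hz2 ?_)
    intro p hp
    by_cases hpγ : p.1 < γ
    · rw [hr1 z _ hpγ]
      exact hz1 p (Finset.mem_filter.2 ⟨hp, hpγ⟩)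
    · rw [hr2 z _ hpγ, ← hr2 z0 _ hpγ]
      exact hs1 p hp
  rcases hGcases F hF with ⟨i, hi, K, hK, rfl⟩ | hFγ
  · refine fact1' s' γ ?_ z0 hz0 hz0s
    intro z hz
    have := hall z hz
    exact ⟨i, hi, this.1, (hK2 i K hK).2.2 this.2⟩
  · obtain ⟨z, hz1, hz2⟩ := hg s' ⟨z0, hz0s, hz0⟩
    exact (hK2 γ F hFγ).2.2 (hall z hz1) (P_mono O (hγ1 s' hs'γ).le hz2)

theorem main_lemma {J X : Type u} [LinearOrder J] [WellFoundedLT J] (hJ : GJ J)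
    [TopologicalSpace X]
    (hprod : ProductivelyQuasiLindelofSp X) (O : J → Set X) (hO : ∀ j, IsOpen (O j))
    (𝒮 : Set (Set (Finset (J × Bool)))) (h1 : ∀ A ∈ 𝒮, A.Countable)
    (h2 : ∀ K, IsCompact K → K ⊆ (Pinf O)ᶜ → ∃ A ∈ 𝒮, K ⊆ CC A) :
    ∃ D ⊆ 𝒮, D.Countable ∧ ∀ x, ∃ A ∈ D, e O x ∈ CC A := by
  obtain ⟨c, hc⟩ := hJ.enum 𝒮 h1 (by
    obtain ⟨A, hA, _⟩ := h2 ∅ isCompact_empty (empty_subset _)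
    exact ⟨A, hA⟩)
  have hcS : ∀ i, c i ∈ 𝒮 := fun i => by rw [← hc]; exact ⟨i, rfl⟩
  by_contra hcon
  have hcase : ∀ j, ∃ x, ∀ i < j, e O x ∉ CC (c i) := by
    intro j
    by_contra hj
    push Not at hj
    refine hcon ⟨c '' Iio j, ?_, (hJ.cnt j).image _, ?_⟩
    · rintro _ ⟨i, _, rfl⟩; exact hcS i
    · intro x
      obtain ⟨i, hi, hx⟩ := hj x
      exact ⟨c i, ⟨i, hi, rfl⟩, hx⟩
  choose x hx using hcase
  let T : Set (J → Bool) := {z | ∀ i, z ∈ CC (c i) → z ∈ P O i}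
  have hcc : ∀ i, (c i).Countable := fun i => h1 _ (hcS i)
  have hK : ∀ K, IsCompact K → K ⊆ (Pinf O)ᶜ → ∃ i, K ⊆ CC (c i) := by
    intro K hK1 hK2
    obtain ⟨A, hA, hKA⟩ := h2 K hK1 hK2
    rw [← hc] at hA
    obtain ⟨i, rfl⟩ := hA
    exact ⟨i, hKA⟩
  have hV : ∀ V, IsOpen V → T ⊆ V → ∃ ξ, Vᶜ ⊆ Glt O c ξ := by
    intro V hV hTV
    refine key hJ hprod O hO c hcc hK Vᶜ hV.isClosed_compl ?_
    intro z hz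
    by_contra hcon2
    push Not at hcon2
    exact hz (hTV hcon2)
  have hTG : ∀ ξ, T ⊆ (Glt O c ξ)ᶜ := by
    rintro ξ z hz ⟨i, _, h3, h4⟩
    exact h4 (hz i h3)
  refine engine hJ hprod O hO T ?_ ?_ x ?_
  · intro z hz
    by_contra hzP
    obtain ⟨i, hi⟩ := hK {z} isCompact_singleton (singleton_subset_iff.2 hzP)
    exact hzP (P_sub O i (hz i (hi rfl)))
  · apply isLindelof_of_countable_subcover
    intro ι U hU hTU
    obtain ⟨ξ, hξ⟩ := hV (⋃ i, U i) (isOpen_iUnion hU) hTU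
    obtain ⟨t, ht, htc⟩ := (Glt_lindelof hJ O c hcc ξ).elim_countable_subcover U hU
      (compl_subset_comm.1 hξ)
    exact ⟨t, ht, (hTG ξ).trans htc⟩
  · intro V hVo hTV
    obtain ⟨ξ, hξ⟩ := hV V hVo hTV
    refine (hJ.cnt ξ).mono ?_
    intro j hj
    by_contra hjξ
    obtain ⟨i, hi, h3, _⟩ := hξ hj
    exact hx j i (hi.trans_le (not_lt.1 hjξ)) h3

def Good {J X : Type u} (O : J → Set X) (𝒲 : Set (Set (ℕ → X))) (n : ℕ)
    (A : ℕ → Set (Finset (J × Bool))) : Prop :=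
  ∃ 𝒱 ⊆ 𝒲, 𝒱.Countable ∧ ∀ x : ℕ → X, (∀ k < n, e O (x k) ∈ CC (A k)) → ∃ W ∈ 𝒱, x ∈ W

def Inv {J X : Type u} (O : J → Set X) (𝒲 : Set (Set (ℕ → X))) (n : ℕ)
    (K : ℕ → Set (J → Bool)) : Prop :=
  ∀ A : ℕ → Set (Finset (J × Bool)), (∀ k < n, (A k).Countable ∧ K k ⊆ CC (A k)) → ¬ Good O 𝒲 n A

theorem step {J X : Type u} [LinearOrder J] [WellFoundedLT J] (hJ : GJ J)
    [TopologicalSpace X]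
    (hprod : ProductivelyQuasiLindelofSp X) (O : J → Set X) (hO : ∀ j, IsOpen (O j))
    (𝒲 : Set (Set (ℕ → X))) (n : ℕ) (K : ℕ → Set (J → Bool)) (hI : Inv O 𝒲 n K) :
    ∃ L, IsCompact L ∧ L ⊆ (Pinf O)ᶜ ∧ Inv O 𝒲 (n + 1) (Function.update K n L) := by
  classical
  by_contra hcon
  push Not at hcon
  obtain ⟨D, hD1, hD2, hD3⟩ := main_lemma hJ hprod O hO
    {A | A.Countable ∧ ∃ B : ℕ → Set (Finset (J × Bool)),
      (∀ k < n, (B k).Countable ∧ K k ⊆ CC (B k)) ∧ Good O 𝒲 (n + 1) (Function.update B n A)}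
    (fun A hA => hA.1) (by
      intro L hL1 hL2
      have := hcon L hL1 hL2
      unfold Inv at this
      push Not at this
      obtain ⟨A, hA, hG⟩ := this
      refine ⟨A n, ⟨(hA n (Nat.lt_succ_self n)).1, A, ?_, ?_⟩, ?_⟩
      · intro k hk
        have := hA k (hk.trans (Nat.lt_succ_self n))
        rw [Function.update_of_ne hk.ne] at this
        exact this
      · rw [Function.update_eq_self]; exact hG
      · have := (hA n (Nat.lt_succ_self n)).2
        rw [Function.update_self] at this
        exact this)
  have h1 : ∀ A ∈ D, ∃ B : ℕ → Set (Finset (J × Bool)),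
      (∀ k < n, (B k).Countable ∧ K k ⊆ CC (B k)) ∧ Good O 𝒲 (n + 1) (Function.update B n A) :=
    fun A hA => (hD1 hA).2
  choose! B hB hG using h1
  choose! 𝒱 hV1 hV2 hV3 using hG
  refine hI (fun k => ⋃ A ∈ D, B A k) ?_ ?_
  · intro k hk
    refine ⟨hD2.biUnion fun A hA => (hB A hA k hk).1, ?_⟩
    intro z hz s hs
    simp only [mem_iUnion] at hs
    obtain ⟨A, hA, hs⟩ := hs
    exact (hB A hA k hk).2 hz s hs
  · refine ⟨⋃ A ∈ D, 𝒱 A, iUnion₂_subset hV1, hD2.biUnion hV2, ?_⟩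
    intro x hx
    obtain ⟨A, hA, hxA⟩ := hD3 (x n)
    obtain ⟨W, hW, hxW⟩ := hV3 A hA x (by
      intro k hk
      rcases Nat.lt_succ_iff_lt_or_eq.1 hk with h | rfl
      · rw [Function.update_of_ne h.ne]
        intro s hs
        refine hx k h s ?_
        simp only [mem_iUnion]
        exact ⟨A, hA, hs⟩
      · rw [Function.update_self]; exact hxA)
    refine ⟨W, ?_, hxW⟩
    simp only [mem_iUnion]
    exact ⟨A, hA, hW⟩

theorem seqK {J X : Type u} [LinearOrder J] [WellFoundedLT J] (hJ : GJ J)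
    [TopologicalSpace X]
    (hprod : ProductivelyQuasiLindelofSp X) (O : J → Set X) (hO : ∀ j, IsOpen (O j))
    (𝒲 : Set (Set (ℕ → X))) (h0 : Inv O 𝒲 0 (fun _ => ∅)) :
    ∃ K : ℕ → Set (J → Bool), (∀ n, IsCompact (K n)) ∧ (∀ n, K n ⊆ (Pinf O)ᶜ) ∧
      ∀ n, Inv O 𝒲 n K := by
  classical
  have h1 : ∀ (n : ℕ) (K : ℕ → Set (J → Bool)), ∃ L, Inv O 𝒲 n K → (IsCompact L ∧
      L ⊆ (Pinf O)ᶜ ∧ Inv O 𝒲 (n + 1) (Function.update K n L)) := by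
    intro n K
    by_cases h : Inv O 𝒲 n K
    · obtain ⟨L, hL⟩ := step hJ hprod O hO 𝒲 n K h
      exact ⟨L, fun _ => hL⟩
    · exact ⟨∅, fun h' => absurd h' h⟩
  choose L hL using h1
  let Q : ℕ → (ℕ → Set (J → Bool)) :=
    fun n => Nat.rec (fun _ => ∅) (fun n K => Function.update K n (L n K)) n
  have hQ0 : Q 0 = fun _ => ∅ := rfl
  have hQs : ∀ n, Q (n + 1) = Function.update (Q n) n (L n (Q n)) := fun n => rfl
  have hQI : ∀ n, Inv O 𝒲 n (Q n) := by
    intro n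
    induction n with
    | zero => exact h0
    | succ n ih => rw [hQs]; exact (hL n _ ih).2.2
  have hQk : ∀ n, Q (n + 1) n = L n (Q n) := by
    intro n; rw [hQs, Function.update_self]
  have hcoh : ∀ k m, Q (k + 1 + m) k = Q (k + 1) k := by
    intro k m
    induction m with
    | zero => rfl
    | succ m ih =>
      rw [← add_assoc, hQs, Function.update_of_ne (by omega), ih]
  refine ⟨fun n => Q (n + 1) n, ?_, ?_, ?_⟩
  · intro n
    simp only [hQk]
    exact (hL n _ (hQI n)).1
  · intro n
    simp only [hQk]
    exact (hL n _ (hQI n)).2.1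
  · intro n A hA
    apply hQI n A
    intro k hk
    obtain ⟨m, rfl⟩ := Nat.exists_eq_add_of_le (show k + 1 ≤ n from hk)
    rw [hcoh]
    exact hA k hk

theorem final {J X : Type u} [LinearOrder J] [WellFoundedLT J] (hJ : GJ J)
    [TopologicalSpace X]
    (hprod : ProductivelyQuasiLindelofSp X) (𝒲 : Set (Set (ℕ → X)))
    (hb : ∀ W ∈ 𝒲, IsBasicOpen X W) (hcov : ⋃₀ 𝒲 = Set.univ) (hcard : #𝒲 ≤ Cardinal.continuum) :
    ∃ 𝒱 ⊆ 𝒲, 𝒱.Countable ∧ ⋃₀ 𝒱 = Set.univ := by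
  classical
  by_cases hne : Nonempty 𝒲
  swap
  · refine ⟨𝒲, Subset.rfl, ?_, hcov⟩
    rw [not_nonempty_iff] at hne
    exact Set.to_countable 𝒲
  choose V hVo hVf hVW using fun W : 𝒲 => hb W.1 W.2
  obtain ⟨π, hπ⟩ := hJ.surj (𝒲 × ℕ) inferInstance (by
    rw [Cardinal.mk_prod]
    simp only [Cardinal.lift_uzero, Cardinal.mk_nat, Cardinal.lift_aleph0]
    refine (mul_le_mul_left hcard _).trans ?_
    rw [Cardinal.continuum_mul_aleph0])
  choose σ hσ using hπ
  let O : J → Set X := fun j => V (π j).1 (π j).2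
  have hO : ∀ j, IsOpen (O j) := fun j => hVo _ _
  have hOσ : ∀ W k, O (σ (W, k)) = V W k := by
    intro W k
    simp only [O, hσ]
  by_contra hcon
  obtain ⟨K, hKc, hKP, hKI⟩ := seqK hJ hprod O hO 𝒲 (by
    rintro A _ ⟨𝒱, h1, h2, h3⟩
    refine hcon ⟨𝒱, h1, h2, ?_⟩
    rw [eq_univ_iff_forall]
    intro x
    exact h3 x (fun k hk => absurd hk (Nat.not_lt_zero k)))
  have hKne : ∀ n, (K n).Nonempty := by
    intro n
    by_contra h
    rw [not_nonempty_iff_eq_empty] at h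
    refine hKI (n + 1) (fun k => if k = n then {∅} else ∅) ?_ ⟨∅, empty_subset _, countable_empty, ?_⟩
    · intro k hk
      by_cases hkn : k = n
      · subst hkn
        simp [h]
      · simp [hkn, CC]
    · intro x hx
      have := hx n (Nat.lt_succ_self n)
      simp [CC, bas] at this
  have hcomp : IsCompact (Set.pi univ K) := isCompact_univ_pi hKc
  obtain ⟨t, ht⟩ := hcomp.elim_finite_subcover
    (fun W : 𝒲 => {z : ℕ → J → Bool | ∀ k ∈ (hVf W).toFinset, z k (σ (W, k)) = true}) (by
      intro W
      have : {z : ℕ → J → Bool | ∀ k ∈ (hVf W).toFinset, z k (σ (W, k)) = true}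
        = ⋂ k ∈ (hVf W).toFinset, (fun z : ℕ → J → Bool => z k) ⁻¹' {z | z (σ (W, k)) = true} := by
        ext z
        simp only [mem_iInter, mem_preimage, mem_ofPred_eq]
      rw [this]
      exact isOpen_biInter_finset fun k _ =>
        (isClopen_coord _ true).isOpen.preimage (continuous_apply k)) (by
      intro z hz
      have h1 : ∀ n, ∃ x, ∀ ξ, x ∈ O ξ → z n ξ = true := by
        intro n
        have := hKP n (hz n (mem_univ n))
        by_contra hcon2
        push Not at hcon2
        apply this
        intro x
        obtain ⟨ξ, h1, h2⟩ := hcon2 x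
        exact ⟨ξ, h1, by simpa using h2⟩
      choose x hx using h1
      have hxu : x ∈ ⋃₀ 𝒲 := by rw [hcov]; exact mem_univ x
      obtain ⟨W, hW, hxW⟩ := hxu
      refine mem_iUnion.2 ⟨⟨W, hW⟩, ?_⟩
      intro k _
      apply hx
      rw [hOσ]
      have h3 := hVW ⟨W, hW⟩
      simp only at h3
      rw [h3] at hxW
      exact hxW k (mem_univ k))
  let Fs : Finset J := t.biUnion fun W => (hVf W).toFinset.image fun k => σ (W, k)
  let n0 : ℕ := (t.biUnion fun W => (hVf W).toFinset).sup id + 1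
  refine hKI n0 (fun k => {s | (∀ p ∈ s, p.1 ∈ (Fs : Set J)) ∧ ∀ z ∈ K k, z ∉ bas s}) ?_ ?_
  · intro k _
    refine ⟨(countable_fin Fs.countable_toSet).mono fun s hs => hs.1, ?_⟩
    intro z hz s hs
    exact hs.2 z hz
  · refine ⟨Subtype.val '' (t : Set 𝒲), ?_, t.countable_toSet.image _, ?_⟩
    · rintro _ ⟨W, _, rfl⟩; exact W.2
    · intro x hx
      have h1 : ∀ k, ∃ z ∈ K k, k < n0 → ∀ j ∈ Fs, z j = e O (x k) j := by
        intro k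
        by_cases hk : k < n0
        · by_contra hcon2
          push Not at hcon2
          refine hx k hk (Fs.image fun j => (j, e O (x k) j)) ⟨?_, ?_⟩ ?_
          · intro p hp
            obtain ⟨j, hj, rfl⟩ := Finset.mem_image.1 hp
            exact hj
          · intro z hz hzs
            obtain ⟨_, j, hj, hne⟩ := hcon2 z hz
            exact hne (hzs _ (Finset.mem_image_of_mem _ hj))
          · intro p hp
            obtain ⟨j, hj, rfl⟩ := Finset.mem_image.1 hp
            rfl
        · obtain ⟨z, hz⟩ := hKne k
          exact ⟨z, hz, fun h => absurd h hk⟩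
      choose z hz1 hz2 using h1
      have := ht (show z ∈ Set.pi univ K from fun k _ => hz1 k)
      simp only [mem_iUnion] at this
      obtain ⟨W, hW, hzW⟩ := this
      refine ⟨W.1, ⟨W, hW, rfl⟩, ?_⟩
      rw [hVW W]
      intro k _
      by_cases hk : k ∈ (hVf W).toFinset
      · have h3 := hzW k hk
        have hkn : k < n0 := Nat.lt_succ_of_le
          (Finset.le_sup (f := id) (Finset.mem_biUnion.2 ⟨W, hW, hk⟩))
        rw [hz2 k hkn _ (Finset.mem_biUnion.2 ⟨W, hW, Finset.mem_image_of_mem _ hk⟩), e_true,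
          hOσ] at h3
        exact h3
      · have : V W k = Set.univ := by
          by_contra h
          exact hk ((hVf W).mem_toFinset.2 h)
        rw [this]
        exact mem_univ _

theorem exists_GJ (hCH : Cardinal.continuum.{u} = Cardinal.aleph 1) :
    GJ (Cardinal.aleph.{u} 1).ord.ToType := by
  have hcard : #(Cardinal.aleph.{u} 1).ord.ToType = Cardinal.aleph 1 := by
    rw [Cardinal.mk_toType, Cardinal.card_ord]
  refine ⟨?_, ?_, ?_, ?_⟩
  · intro j
    rw [Cardinal.countable_iff_lt_aleph_one]
    exact Cardinal.mk_Iio_toType_ord_lt j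
  · intro h
    rw [Cardinal.countable_iff_lt_aleph_one, Cardinal.mk_univ, hcard] at h
    exact lt_irrefl _ h
  · rw [hcard, hCH]
  · intro α hα h
    rw [hCH, ← hcard, Cardinal.le_def] at h
    obtain ⟨f⟩ := h
    exact ⟨Function.invFun f, Function.invFun_surjective f.injective⟩

theorem prod_closed {X : Type u} [TopologicalSpace X] (hprod : ProductivelyQuasiLindelofSp X)
    (L : Set X) (hL : IsClosed L) : ProductivelyQuasiLindelofSp L := by
  intro Y _ hY
  have h1 := hprod Y hY
  rw [quasi_iff] at h1 ⊢
  have h2 : IsClosedEmbedding (Prod.map (Subtype.val : L → X) (id : Y → Y)) :=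
    hL.isClosedEmbedding_subtypeVal.prodMap IsClosedEmbedding.id
  exact h2.LindelofSpace

abbrev Lab : Type := Option ((ℕ → ℕ → Bool) × ℕ)

abbrev Ch : Lab → Type := fun a => match a with
  | none => Empty
  | some _ => ℕ

theorem card_W : #(WType Ch) ≤ Cardinal.continuum := by
  apply WType.cardinalMk_le_of_le'
  refine (Cardinal.sum_le_sum _ (fun _ => Cardinal.continuum) ?_).trans ?_
  · rintro (_ | a)
    · simpa using (Cardinal.nat_lt_continuum 1).le
    · simp
  · simp only [Cardinal.sum_const, Cardinal.lift_id]
    have : #Lab ≤ Cardinal.continuum := by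
      simp only [Lab, Cardinal.mk_option, Cardinal.mk_prod, Cardinal.lift_id, Cardinal.mk_nat,
        Cardinal.mk_arrow, Cardinal.mk_bool]
      simp only [Cardinal.lift_ofNat, Cardinal.two_power_aleph0, Cardinal.continuum_power_aleph0,
        Cardinal.continuum_mul_aleph0]
      exact (Cardinal.add_one_eq Cardinal.aleph0_le_continuum).le
    refine (mul_le_mul_left this _).trans ?_
    simp

theorem red {J : Type u} [LinearOrder J] [WellFoundedLT J] (hJ : GJ J)
    {X : Type u} [TopologicalSpace X]
    (hprod : ProductivelyQuasiLindelofSp X) (𝒲 : Set (Set (ℕ → X)))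
    (hb : ∀ W ∈ 𝒲, IsBasicOpen X W) (hcov : ⋃₀ 𝒲 = Set.univ)
    (hpt : PointLE 𝒲 Cardinal.continuum) :
    ∃ 𝒱 ⊆ 𝒲, 𝒱.Countable ∧ ⋃₀ 𝒱 = Set.univ := by
  classical
  by_cases hX : Nonempty X
  swap
  · rw [not_nonempty_iff] at hX
    exact ⟨∅, empty_subset _, countable_empty, Subsingleton.elim _ _⟩
  obtain ⟨x0⟩ := hX
  have hφ : ∀ m : ℕ → X, ∃ f : (ℕ → Bool) → Set (ℕ → X), range f = {W ∈ 𝒲 | m ∈ W} := by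
    intro m
    have hne : Nonempty {W ∈ 𝒲 | m ∈ W} := by
      have : m ∈ ⋃₀ 𝒲 := by rw [hcov]; exact mem_univ m
      obtain ⟨W, hW, hm⟩ := this
      exact ⟨⟨W, hW, hm⟩⟩
    have h1 : Cardinal.lift.{0} #{W ∈ 𝒲 | m ∈ W} ≤ Cardinal.lift.{u} #(ℕ → Bool) := by
      have h2 : #(ℕ → Bool) = Cardinal.continuum := by simp
      rw [h2, Cardinal.lift_continuum, Cardinal.lift_uzero]
      exact hpt m
    obtain ⟨g⟩ := Cardinal.lift_mk_le'.1 h1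
    refine ⟨fun p => (Function.invFun g p).1, ?_⟩
    rw [show (fun p => (Function.invFun g p).1) = Subtype.val ∘ Function.invFun g from rfl,
      range_comp, (Function.invFun_surjective g.injective).range_eq, image_univ,
      Subtype.range_coe]
  choose φ hφ using hφ
  have hφ1 : ∀ m p, φ m p ∈ 𝒲 ∧ m ∈ φ m p := by
    intro m p
    have : φ m p ∈ range (φ m) := ⟨p, rfl⟩
    rw [hφ] at this
    exact this
  let N : ((ℕ → ℕ → Bool) × ℕ) → (ℕ → X) → X := fun a s =>
    if h : ∃ u : ℕ → X, ∀ k, u ∉ φ (fun i => s (Nat.pair k i)) (a.1 k) then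
      Classical.choose h a.2 else x0
  let F : (Σ a : Lab, Ch a → X) → X := fun q => match q with
    | ⟨none, _⟩ => x0
    | ⟨some a, s⟩ => N a s
  let ev : WType Ch → X := WType.elim X F
  have hev0 : x0 ∈ range ev := ⟨WType.mk none Empty.elim, rfl⟩
  have hevN : ∀ a (s : ℕ → X), (∀ i, s i ∈ range ev) → N a s ∈ range ev := by
    intro a s hs
    choose t ht using hs
    refine ⟨WType.mk (some a) t, ?_⟩
    have : s = fun i => ev (t i) := funext fun i => (ht i).symm
    rw [this]
    rfl
  let M : Set X := range ev
  let 𝒲M : Set (Set (ℕ → X)) := {W ∈ 𝒲 | ∃ m ∈ W, ∀ i, m i ∈ M}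
  have hcl : ∀ 𝒱 ⊆ 𝒲M, 𝒱.Countable → (∀ u : ℕ → X, (∀ i, u i ∈ M) → ∃ W ∈ 𝒱, u ∈ W) →
      ⋃₀ 𝒱 = Set.univ := by
    intro 𝒱 hV hVc hVM
    obtain ⟨W0, hW0, _⟩ := hVM (fun _ => x0) (fun _ => hev0)
    obtain ⟨w, hw⟩ := hVc.exists_eq_range ⟨W0, hW0⟩
    have hwV : ∀ k, w k ∈ 𝒲M := fun k => hV (by rw [hw]; exact ⟨k, rfl⟩)
    choose hw𝒲 m hm1 hm2 using hwV
    have hp : ∀ k, ∃ p, φ (m k) p = w k := by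
      intro k
      have : w k ∈ range (φ (m k)) := by rw [hφ]; exact ⟨hw𝒲 k, hm1 k⟩
      exact this
    choose p hp using hp
    by_contra hcon
    rw [eq_univ_iff_forall] at hcon
    push Not at hcon
    obtain ⟨v, hv⟩ := hcon
    let s : ℕ → X := fun n => m n.unpair.1 n.unpair.2
    have hs : ∀ k, (fun i => s (Nat.pair k i)) = m k := by
      intro k; funext i; simp [s]
    have hex : ∃ u : ℕ → X, ∀ k, u ∉ φ (fun i => s (Nat.pair k i)) (p k) := by
      refine ⟨v, fun k hk => hv ?_⟩
      rw [hs, hp] at hk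
      exact ⟨w k, by rw [hw]; exact ⟨k, rfl⟩, hk⟩
    have hu := Classical.choose_spec hex
    obtain ⟨W, hW, huW⟩ := hVM (Classical.choose hex) (by
      intro j
      have h1 := hevN (p, j) s (fun i => hm2 _ _)
      have h2 : N (p, j) s = Classical.choose hex j := dif_pos hex
      rw [h2] at h1
      exact h1)
    rw [hw] at hW
    obtain ⟨k, rfl⟩ := hW
    apply hu k
    rw [hs, hp]
    exact huW
  have hWcard : #𝒲M ≤ Cardinal.continuum := by
    have hsub : 𝒲M ⊆ range
        (fun q : (ℕ → WType Ch) × (ℕ → Bool) => φ (fun i => ev (q.1 i)) q.2) := by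
      rintro W ⟨hW, m, hm, hmM⟩
      choose t ht using hmM
      have hmt : m = fun i => ev (t i) := funext fun i => (ht i).symm
      have : W ∈ range (φ m) := by rw [hφ]; exact ⟨hW, hm⟩
      obtain ⟨p, hp⟩ := this
      exact ⟨(t, p), by simp only [← hmt]; exact hp⟩
    refine (Cardinal.mk_le_mk_of_subset hsub).trans ?_
    have h1 := Cardinal.mk_range_le_lift
      (f := fun q : (ℕ → WType Ch) × (ℕ → Bool) => φ (fun i => ev (q.1 i)) q.2)
    rw [Cardinal.lift_uzero] at h1
    refine h1.trans ?_
    rw [← Cardinal.lift_continuum.{u, 0}, Cardinal.lift_le]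
    have h3 : #(ℕ → WType Ch) ≤ Cardinal.continuum := by
      rw [Cardinal.mk_arrow]
      simp only [Cardinal.lift_id, Cardinal.mk_nat]
      refine (Cardinal.power_le_power_right card_W).trans ?_
      rw [Cardinal.continuum_power_aleph0]
    rw [Cardinal.mk_prod]
    simp only [Cardinal.lift_id]
    refine (mul_le_mul_left h3 _).trans ?_
    simp
  let L : Set X := closure M
  have hLprod := prod_closed hprod L isClosed_closure
  let ι : (ℕ → L) → (ℕ → X) := fun z i => (z i).1
  obtain ⟨𝒱, hV1, hV2, hV3⟩ := final hJ hLprod ((fun W => ι ⁻¹' W) '' 𝒲M) (by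
      rintro _ ⟨W, hW, rfl⟩
      obtain ⟨V, hVo, hVf, rfl⟩ := hb W hW.1
      refine ⟨fun k => Subtype.val ⁻¹' V k, fun k => (hVo k).preimage continuous_subtype_val,
        hVf.subset ?_, ?_⟩
      · intro k hk hVk
        apply hk
        change Subtype.val ⁻¹' V k = Set.univ
        rw [hVk, preimage_univ]
      · ext z
        simp [ι, Set.mem_pi]) (by
      rw [eq_univ_iff_forall]
      intro z
      have : ι z ∈ ⋃₀ 𝒲 := by rw [hcov]; exact mem_univ _
      obtain ⟨W, hW, hzW⟩ := this
      refine ⟨_, ⟨W, ⟨hW, ?_⟩, rfl⟩, hzW⟩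
      obtain ⟨V, hVo, hVf, rfl⟩ := hb W hW
      have h1 : ∀ k, ∃ y, y ∈ V k ∧ y ∈ M := by
        intro k
        obtain ⟨y, hy⟩ := mem_closure_iff.1 (z k).2 (V k) (hVo k) (hzW k (mem_univ k))
        exact ⟨y, hy⟩
      choose y hy1 hy2 using h1
      exact ⟨y, fun k _ => hy1 k, hy2⟩) (Cardinal.mk_image_le.trans hWcard)
  have h1 : ∀ v : 𝒱, ∃ W ∈ 𝒲M, ι ⁻¹' W = v := fun v => hV1 v.2
  choose g hg1 hg2 using h1
  have : Countable 𝒱 := hV2.to_subtype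
  have hgM : range g ⊆ 𝒲M := by rintro _ ⟨v, rfl⟩; exact hg1 v
  refine ⟨range g, fun W hW => (hgM hW).1, countable_range g, ?_⟩
  refine hcl (range g) hgM (countable_range g) ?_
  intro x hx
  let z : ℕ → L := fun i => ⟨x i, subset_closure (hx i)⟩
  have hz : z ∈ ⋃₀ 𝒱 := by rw [hV3]; exact mem_univ z
  obtain ⟨v, hv, hzv⟩ := hz
  refine ⟨g ⟨v, hv⟩, ⟨_, rfl⟩, ?_⟩
  have : z ∈ ι ⁻¹' (g ⟨v, hv⟩) := by rw [hg2]; exact hzv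
  exact this

theorem ch_lift (hCH : Cardinal.continuum.{v} = Cardinal.aleph 1) :
    Cardinal.continuum.{u} = Cardinal.aleph 1 := by
  have h := congrArg Cardinal.lift.{u} hCH
  rw [Cardinal.lift_continuum, Cardinal.lift_aleph, Ordinal.lift_one] at h
  apply Cardinal.lift_injective.{v}
  rw [Cardinal.lift_continuum, Cardinal.lift_aleph, Ordinal.lift_one]
  exact h

end S13

/-- Under CH, a productively quasi-Lindelöf space X such that every open
cover of X^ω has a point-𝔠 refinement consisting of basic open sets is powerfully
quasi-Lindelöf. -/
theorem stmt13 (hCH : Cardinal.continuum = Cardinal.aleph 1)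
    (X : Type u) [TopologicalSpace X]
    (hprod : ProductivelyQuasiLindelofSp X)
    (href : ∀ 𝒰 : Set (Set (ℕ → X)), (∀ U ∈ 𝒰, IsOpen U) → ⋃₀ 𝒰 = Set.univ →
      ∃ 𝒲 : Set (Set (ℕ → X)), (∀ W ∈ 𝒲, IsBasicOpen X W) ∧
        (∀ W ∈ 𝒲, ∃ U ∈ 𝒰, W ⊆ U) ∧ ⋃₀ 𝒲 = Set.univ ∧
        PointLE 𝒲 Cardinal.continuum) :
    PowerfullyQuasiLindelofSp X := by
  intro 𝒰 hU hc
  obtain ⟨𝒲, h1, h2, h3, h4⟩ := href 𝒰 hU hc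
  obtain ⟨𝒱, hV1, hV2, hV3⟩ := S13.red (S13.exists_GJ (S13.ch_lift hCH)) hprod 𝒲 h1 h3 h4
  have h5 : ∀ v : 𝒱, ∃ U ∈ 𝒰, v.1 ⊆ U := fun v => h2 v.1 (hV1 v.2)
  choose g hg1 hg2 using h5
  have : Countable 𝒱 := hV2.to_subtype
  refine ⟨range g, by rintro _ ⟨v, rfl⟩; exact hg1 v, countable_range g, ?_⟩
  rw [Set.eq_univ_iff_forall]
  intro x
  have hx : x ∈ ⋃₀ 𝒱 := by rw [hV3]; exact Set.mem_univ x
  obtain ⟨v, hv, hxv⟩ := hx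
  exact ⟨g ⟨v, hv⟩, ⟨_, rfl⟩, hg2 ⟨v, hv⟩ hxv⟩
end

section
/- Assume the Continuum Hypothesis. Let X be a productively quasi-Lindelöf topological space such that the Lindelöf number of X^ω is at most 𝔠. Then X is powerfully quasi-Lindelöf. -/
open Set Cardinal Topology

universe u v

set_option linter.unusedSectionVars false

namespace PQL

class Om (ι : Type u) [LinearOrder ι] : Prop where
  wf : WellFoundedLT ι
  ctb : ∀ a : ι, (Iio a).Countable
  unc : ¬ (univ : Set ι).Countable

section
variable {ι : Type u} [LinearOrder ι]

def cyl (p : Finset (ι × Bool)) : Set (ι → Bool) := {y | ∀ q ∈ p, y q.1 = q.2}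

def SL (ξ : ι) (p : Finset (ι × Bool)) : Prop := ∀ q ∈ p, q.1 < ξ

def sat (ξ : ι) (Z : Set (ι → Bool)) : Set (ι → Bool) := {y | ∃ z ∈ Z, ∀ a < ξ, y a = z a}

def CS (ξ : ι) (F : Set (ι → Bool)) : Prop :=
  ∀ z, z ∉ F → ∃ p, SL ξ p ∧ z ∈ cyl p ∧ Disjoint (cyl p) F

def gc (c : ℕ → Finset (ι × Bool)) : Set (ι → Bool) := {y | ∀ n, y ∉ cyl (c n)}

structure Sig {K : Type v} (G : Set K → Prop) : Prop where
  mono : ∀ {A B}, A ⊆ B → G B → G A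
  un : ∀ 𝒮 : Set (Set K), 𝒮.Countable → (∀ S ∈ 𝒮, G S) → G (⋃₀ 𝒮)

theorem Sig.empty {K : Type v} {G : Set K → Prop} (h : Sig G) : G ∅ := by
  have := h.un ∅ countable_empty (by simp)
  simpa using this

theorem Sig.iUn {K : Type v} {G : Set K → Prop} (h : Sig G) {J : Type*} [Countable J]
    (f : J → Set K) (hf : ∀ j, G (f j)) : G (⋃ j, f j) := by
  have := h.un (range f) (countable_range f) (by rintro _ ⟨j, rfl⟩; exact hf j)
  rwa [sUnion_range] at this

theorem Sig.union {K : Type v} {G : Set K → Prop} (h : Sig G) {A B : Set K} (hA : G A) (hB : G B) :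
    G (A ∪ B) := by
  have := h.un {A, B} (by simp) (by rintro S (rfl | rfl) <;> assumption)
  simpa using this

theorem bdd [Om ι] {s : Set ι} (hs : s.Countable) : ∃ b, ∀ a ∈ s, a < b := by
  by_contra! h
  apply Om.unc (ι := ι)
  have : (⋃ a ∈ s, Iic a).Countable := hs.biUnion (fun a _ => by
    rw [← Iio_insert]; exact (Om.ctb a).insert a)
  refine this.mono fun b _ => ?_
  obtain ⟨a, ha, hb⟩ := h b
  exact mem_biUnion ha hb

theorem isClopen_cyl (p : Finset (ι × Bool)) : IsClopen (cyl p) := by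
  have : cyl p = ⋂ q ∈ p, (fun y : ι → Bool => y q.1) ⁻¹' {q.2} := by
    ext y; simp [cyl]
  rw [this]
  exact isClopen_biInter_finset fun q _ => (isClopen_discrete _).preimage (continuous_apply _)

theorem exists_cyl {U : Set (ι → Bool)} (hU : IsOpen U) {y : ι → Bool} (hy : y ∈ U) :
    ∃ p, y ∈ cyl p ∧ cyl p ⊆ U := by
  classical
  obtain ⟨I, u, h1, h2⟩ := isOpen_pi_iff.1 hU y hy
  refine ⟨I.image fun a => (a, y a), by simp [cyl], fun z hz => h2 fun a ha => ?_⟩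
  have := hz (a, y a) (Finset.mem_image_of_mem _ ha)
  simp only at this
  rw [this]; exact (h1 a ha).2

theorem cyl_union (p q : Finset (ι × Bool)) [DecidableEq ι] : cyl (p ∪ q) = cyl p ∩ cyl q := by
  ext y; simp only [cyl, Finset.mem_union, mem_ofPred_eq, mem_inter_iff]
  exact ⟨fun h => ⟨fun a ha => h a (Or.inl ha), fun a ha => h a (Or.inr ha)⟩,
    fun h a ha => ha.elim (h.1 a) (h.2 a)⟩

theorem SL.union [DecidableEq ι] {ξ : ι} {p q : Finset (ι × Bool)} (hp : SL ξ p) (hq : SL ξ q) :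
    SL ξ (p ∪ q) := fun a ha => (Finset.mem_union.1 ha).elim (hp a) (hq a)

theorem SL.mono {ξ η : ι} (h : ξ ≤ η) {p : Finset (ι × Bool)} (hp : SL ξ p) : SL η p :=
  fun a ha => (hp a ha).trans_le h

theorem CS.mono {ξ η : ι} (h : ξ ≤ η) {F : Set (ι → Bool)} (hp : CS ξ F) : CS η F :=
  fun z hz => let ⟨p, h1, h2⟩ := hp z hz; ⟨p, h1.mono h, h2⟩

theorem CS.closed {ξ : ι} {F : Set (ι → Bool)} (h : CS ξ F) : IsClosed F := by
  rw [← isOpen_compl_iff, isOpen_iff_forall_mem_open]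
  intro z hz
  obtain ⟨p, -, h2, h3⟩ := h z hz
  exact ⟨cyl p, fun y hy hF => h3.le_bot ⟨hy, hF⟩, (isClopen_cyl p).isOpen, h2⟩

theorem SL.cyl_iff {ξ : ι} {p : Finset (ι × Bool)} (h : SL ξ p) {y z : ι → Bool}
    (hyz : ∀ a < ξ, y a = z a) (hz : z ∈ cyl p) : y ∈ cyl p := fun q hq => by
  rw [hyz _ (h q hq)]; exact hz q hq

theorem CS.satd {ξ : ι} {F : Set (ι → Bool)} (h : CS ξ F) {y z : ι → Bool}
    (hyz : ∀ a < ξ, y a = z a) (hz : z ∈ F) : y ∈ F := by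
  by_contra hy
  obtain ⟨p, h1, h2, h3⟩ := h y hy
  exact h3.le_bot ⟨h1.cyl_iff (fun a ha => (hyz a ha).symm) h2, hz⟩

theorem countable_SL [Om ι] (ξ : ι) : {p : Finset (ι × Bool) | SL ξ p}.Countable := by
  have h1 : (Iio ξ ×ˢ (univ : Set Bool)).Countable := (Om.ctb ξ).prod (countable_univ)
  have h2 := Set.countable_ofPred_finite_subset h1
  have h3 : ((fun p : Finset (ι × Bool) => (p : Set (ι × Bool))) ⁻¹'
      {t | t.Finite ∧ t ⊆ Iio ξ ×ˢ (univ : Set Bool)}).Countable :=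
    h2.preimage Finset.coe_injective
  refine h3.mono fun p hp => (show _ ∧ _ from ⟨p.finite_toSet, fun q hq => ⟨hp q hq, trivial⟩⟩)

theorem code [Om ι] {ξ : ι} {F : Set (ι → Bool)} (h : CS ξ F) : ∃ c : ℕ → Finset (ι × Bool), gc c = F := by
  classical
  have : Nonempty ι := ⟨ξ⟩
  set P : Set (Finset (ι × Bool)) := {p | (SL ξ p ∧ Disjoint (cyl p) F) ∨ p = {(ξ, true), (ξ, false)}}
  have hP : P.Countable := by
    have : P ⊆ {p | SL ξ p} ∪ {{(ξ, true), (ξ, false)}} := by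
      rintro p (hp | hp)
      · exact Or.inl hp.1
      · exact Or.inr hp
    exact ((countable_SL ξ).union (countable_singleton _)).mono this
  obtain ⟨c, hc⟩ := hP.exists_eq_range ⟨_, Or.inr rfl⟩
  refine ⟨c, ?_⟩
  ext y
  constructor
  · intro hy
    by_contra hF
    obtain ⟨p, h1, h2, h3⟩ := h y hF
    have : p ∈ P := Or.inl ⟨h1, h3⟩
    rw [hc] at this
    obtain ⟨n, rfl⟩ := this
    exact hy n h2
  · intro hy n hn
    have : c n ∈ P := hc ▸ mem_range_self n
    rcases this with h1 | h1
    · exact h1.2.le_bot ⟨hn, hy⟩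
    · rw [h1] at hn
      have a1 := hn (ξ, true) (by simp)
      have a2 := hn (ξ, false) (by simp)
      simp_all

theorem sat_CS [Om ι] {H : Set (ι → Bool)} (hH : IsCompact H) (γ : ι) : CS γ (sat γ H) := by
  classical
  intro z hz
  have hcov : H ⊆ ⋃ a : Iio γ, {h : ι → Bool | h a ≠ z a} := by
    intro h hh
    by_contra hn
    simp only [mem_iUnion, mem_ofPred_eq, not_exists, not_not, Subtype.forall, mem_Iio] at hn
    exact hz ⟨h, hh, fun a ha => (hn a ha).symm⟩
  obtain ⟨t, ht⟩ := hH.elim_finite_subcover _ (fun a => by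
    have : {h : ι → Bool | h a ≠ z a} = (fun h : ι → Bool => h a) ⁻¹' {z a}ᶜ := rfl
    rw [this]; exact (isOpen_discrete _).preimage (continuous_apply _)) hcov
  refine ⟨t.image fun a => (a.1, z a.1), ?_, ?_, ?_⟩
  · intro q hq
    obtain ⟨a, ha, rfl⟩ := Finset.mem_image.1 hq
    exact a.2
  · intro q hq
    obtain ⟨a, ha, rfl⟩ := Finset.mem_image.1 hq
    rfl
  · rw [Set.disjoint_left]
    rintro y hy ⟨h, hh, hyh⟩
    have := ht hh
    simp only [mem_iUnion, mem_ofPred_eq] at this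
    obtain ⟨a, ha, h3⟩ := this
    apply h3
    rw [← hyh a a.2]
    exact hy (a.1, z a.1) (Finset.mem_image_of_mem (fun a : Iio γ => (a.1, z a.1)) ha)

theorem subset_sat (ξ : ι) (Z : Set (ι → Bool)) : Z ⊆ sat ξ Z := fun z hz => ⟨z, hz, fun _ _ => rfl⟩

theorem sat_anti {ξ η : ι} (h : ξ ≤ η) (Z : Set (ι → Bool)) : sat η Z ⊆ sat ξ Z :=
  fun _ ⟨z, hz, hy⟩ => ⟨z, hz, fun a ha => hy a (ha.trans_le h)⟩

theorem sat_satd {ξ : ι} {Z : Set (ι → Bool)} {y z : ι → Bool}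
    (hyz : ∀ a < ξ, y a = z a) (hz : z ∈ sat ξ Z) : y ∈ sat ξ Z :=
  let ⟨x, hx, h⟩ := hz; ⟨x, hx, fun a ha => (hyz a ha).trans (h a ha)⟩

def HZ (Z : Set (ι → Bool)) : Prop :=
  ∀ (Y : Type u) [TopologicalSpace Y], EngLindelofSp Y → QuasiLindelofSp (Z × Y)

structure GoodFor (A D : Set (ι → Bool)) (Good : Set (ι → Bool) → Prop) : Prop where
  sig : Sig Good
  pt : ∀ y, Good {y}
  nb : ∀ d ∈ D, ∃ p, d ∈ cyl p ∧ Good (cyl p)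
  not : ¬ Good (A ∪ D)

theorem GoodFor.ctbl {A D : Set (ι → Bool)} {Good : Set (ι → Bool) → Prop} (h : GoodFor A D Good)
    {s : Set (ι → Bool)} (hs : s.Countable) : Good s := by
  have := h.sig.un (singleton '' s) (hs.image _) (by rintro _ ⟨y, -, rfl⟩; exact h.pt y)
  simpa using this


def LY (A D : Set (ι → Bool)) : Type u := {y : ι → Bool // y ∈ A ∪ D}

open Classical in
noncomputable def LY.phi {A D : Set (ι → Bool)} (y : LY A D) : (ι → Bool) × ((ι → Bool) → Bool) :=
  (y.1, fun a => decide (y.1 = a ∧ a ∈ A))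

noncomputable instance (A D : Set (ι → Bool)) : TopologicalSpace (LY A D) :=
  TopologicalSpace.induced LY.phi inferInstance

theorem LY.cont {A D : Set (ι → Bool)} : Continuous (LY.phi (A := A) (D := D)) :=
  continuous_induced_dom

theorem LY.open_pt {A D : Set (ι → Bool)} {a : ι → Bool} (ha : a ∈ A) :
    IsOpen {y : LY A D | y.1 = a} := by
  have h1 : IsOpen {f : (ι → Bool) × ((ι → Bool) → Bool) | f.2 a = true} := by
    have : {f : (ι → Bool) × ((ι → Bool) → Bool) | f.2 a = true} = (fun f => f.2 a) ⁻¹' {true} := rfl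
    rw [this]
    exact (isOpen_discrete _).preimage (by fun_prop)
  have := h1.preimage (LY.cont (A := A) (D := D))
  convert this using 1
  ext y
  simp [LY.phi, ha]

theorem LY.nb {A D : Set (ι → Bool)} {d : ι → Bool} (hd : d ∉ A) (hdD : d ∈ A ∪ D) {U : Set (LY A D)}
    (hU : IsOpen U) (hdU : (⟨d, hdD⟩ : LY A D) ∈ U) :
    ∃ p, d ∈ cyl p ∧ ∀ y : LY A D, y.1 ∈ cyl p → y ∈ U := by
  classical
  obtain ⟨W, hW, rfl⟩ := isOpen_induced_iff.1 hU
  obtain ⟨O1, O2, h1, h2, m1, m2, h3⟩ := isOpen_prod_iff.1 hW _ _ hdU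
  obtain ⟨I, u, h4, h5⟩ := isOpen_pi_iff.1 h2 _ m2
  have h6 : IsOpen (O1 ∩ ((I.erase d : Finset _) : Set (ι → Bool))ᶜ) :=
    h1.inter (Finset.finite_toSet _).isClosed.isOpen_compl
  obtain ⟨p, hp1, hp2⟩ := exists_cyl h6 (y := d) ⟨m1, by simp⟩
  refine ⟨p, hp1, fun y hy => ?_⟩
  apply h3
  refine ⟨(hp2 hy).1, h5 fun a ha => ?_⟩
  have h7 := (h4 a ha).2
  have h8 := (hp2 hy).2
  simp only [mem_compl_iff, Finset.mem_coe, Finset.mem_erase, not_and] at h8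
  by_cases had : a = d
  · subst had
    simpa [LY.phi, hd] using h7
  · have h9 : y.1 ≠ a := fun h => h8 (h ▸ had) (h ▸ ha)
    have h10 : d ≠ a := Ne.symm had
    simp only [h10, false_and, decide_false] at h7
    simpa [LY.phi, h9] using h7

theorem LY.regular {A D : Set (ι → Bool)} : RegularSpace (LY A D) := regularSpace_induced _

theorem LY.t1 {A D : Set (ι → Bool)} : T1Space (LY A D) := by
  refine t1Space_iff_exists_open.2 fun x y hxy => ?_
  have : x.1 ≠ y.1 := fun h => hxy (Subtype.ext h)
  refine ⟨(fun y => y.1) ⁻¹' {y.1}ᶜ, ?_, this, by simp⟩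
  exact isOpen_compl_singleton.preimage (continuous_fst.comp LY.cont)

theorem lemL {Z A D : Set (ι → Bool)} (hZ : HZ Z) (hA : A ⊆ Z) (hAu : ¬ A.Countable)
    (hD : ∀ d ∈ D, d ∉ Z) : ∃ Good, GoodFor A D Good := by
  have key : ¬ QuasiLindelofSp (LY A D) := by
    intro hq
    have h1 := hZ (LY A D) ⟨LY.regular, LY.t1, hq⟩
    let N : (ι → Bool) → Set (Z × LY A D) := fun a => {w | w.2.1 = a}
    have hfst : Continuous (fun w : LY A D => w.1) := continuous_fst.comp LY.cont
    obtain ⟨𝒱, hV, hVc, hVu⟩ := h1 ({O | ∃ (α : ι) (b : Bool), O = {w | w.1.1 α = b ∧ w.2.1 α = !b}} ∪ N '' A)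
      (by
        rintro U (⟨α, b, rfl⟩ | ⟨a, ha, rfl⟩)
        · have e1 : IsOpen ((fun w : Z × LY A D => w.1.1 α) ⁻¹' {b}) :=
            (isOpen_discrete _).preimage ((continuous_apply α).comp (continuous_subtype_val.comp continuous_fst))
          have e2 : IsOpen ((fun w : Z × LY A D => w.2.1 α) ⁻¹' {!b}) :=
            (isOpen_discrete _).preimage ((continuous_apply α).comp (hfst.comp continuous_snd))
          exact e1.inter e2
        · exact (LY.open_pt ha).preimage continuous_snd)
      (by
        rw [eq_univ_iff_forall]
        intro w
        by_cases ha : w.2.1 ∈ A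
        · exact ⟨N w.2.1, Or.inr ⟨_, ha, rfl⟩, rfl⟩
        · have hd : w.2.1 ∈ D := w.2.2.resolve_left ha
          have : w.1.1 ≠ w.2.1 := fun h => hD _ hd (h ▸ w.1.2)
          obtain ⟨α, hα⟩ := Function.ne_iff.1 this
          refine ⟨_, Or.inl ⟨α, w.1.1 α, rfl⟩, rfl, ?_⟩
          revert hα
          cases w.1.1 α <;> cases w.2.1 α <;> simp)
    apply hAu
    have hm : MapsTo N A 𝒱 := by
      intro a ha
      let w : Z × LY A D := (⟨a, hA ha⟩, ⟨a, Or.inl ha⟩)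
      have : w ∈ ⋃₀ 𝒱 := hVu ▸ mem_univ w
      obtain ⟨V, hV1, hV2⟩ := this
      rcases hV hV1 with ⟨α, b, rfl⟩ | ⟨a', ha', rfl⟩
      · have := hV2.1.symm.trans hV2.2
        simp at this
      · have : a = a' := hV2
        rwa [this]
    have hi : InjOn N A := by
      intro a ha b hb hab
      have : ((⟨a, hA ha⟩, ⟨a, Or.inl ha⟩) : Z × LY A D) ∈ N a := rfl
      rw [hab] at this
      exact this
    exact hm.countable_of_injOn hi hVc
  unfold QuasiLindelofSp at key
  push Not at key
  obtain ⟨𝒪, hO, hOu, hno⟩ := key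
  refine ⟨fun B => ∃ 𝒱 ⊆ 𝒪, 𝒱.Countable ∧ ∀ y : LY A D, y.1 ∈ B → y ∈ ⋃₀ 𝒱, ⟨?_, ?_⟩, ?_, ?_, ?_⟩
  · rintro B C hBC ⟨𝒱, h1, h2, h3⟩
    exact ⟨𝒱, h1, h2, fun y hy => h3 y (hBC hy)⟩
  · intro 𝒮 hS h
    choose! f h1 h2 h3 using h
    refine ⟨⋃ S ∈ 𝒮, f S, iUnion₂_subset h1, hS.biUnion h2, ?_⟩
    rintro y ⟨S, hS, hy⟩
    obtain ⟨V, hV, hyV⟩ := h3 S hS y hy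
    exact ⟨V, mem_biUnion hS hV, hyV⟩
  · intro y
    by_cases hy : y ∈ A ∪ D
    · have : (⟨y, hy⟩ : LY A D) ∈ ⋃₀ 𝒪 := hOu ▸ mem_univ _
      obtain ⟨V, hV, hyV⟩ := this
      refine ⟨{V}, by simpa using hV, countable_singleton _, ?_⟩
      rintro z hz
      have : z = ⟨y, hy⟩ := Subtype.ext hz
      simpa [this] using hyV
    · refine ⟨∅, by simp, countable_empty, ?_⟩
      rintro z hz
      exact (hy (hz ▸ z.2)).elim
  · intro d hd
    have hdA : d ∉ A := fun h => hD d hd (hA h)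
    have : (⟨d, Or.inr hd⟩ : LY A D) ∈ ⋃₀ 𝒪 := hOu ▸ mem_univ _
    obtain ⟨V, hV, hyV⟩ := this
    obtain ⟨p, hp1, hp2⟩ := LY.nb hdA (Or.inr hd) (hO V hV) hyV
    exact ⟨p, hp1, {V}, by simpa using hV, countable_singleton _, fun y hy => by simpa using hp2 y hy⟩
  · rintro ⟨𝒱, h1, h2, h3⟩
    exact hno 𝒱 h1 h2 (eq_univ_iff_forall.2 fun y => h3 y y.2)

theorem lemT [Om ι] {A D : Set (ι → Bool)} {Good : Set (ι → Bool) → Prop} (hG : GoodFor A D Good)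
    {ξ : ι} {y : ι → Bool} (hy : sat ξ {y} ⊆ D) : ∃ p, SL ξ p ∧ y ∈ cyl p ∧ Good (cyl p) := by
  classical
  have hcl : IsClosed (sat ξ {y}) := (sat_CS isCompact_singleton ξ).closed
  obtain ⟨T, hT⟩ := hcl.isCompact.elim_finite_subcover
    (fun p : {p : Finset (ι × Bool) // Good (cyl p)} => cyl p.1) (fun p => (isClopen_cyl p.1).isOpen)
    (fun d hd => by
      obtain ⟨p, h1, h2⟩ := hG.nb d (hy hd)
      exact mem_iUnion.2 ⟨⟨p, h2⟩, h1⟩)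
  let q : Finset (ι × Bool) := ((T.biUnion fun p => p.1.image Prod.fst).filter (· < ξ)).image fun a => (a, y a)
  have hq : ∀ a < ξ, ∀ p ∈ T, ∀ b, (a, b) ∈ p.1 → (a, y a) ∈ q := by
    intro a ha p hp b hb
    refine Finset.mem_image.2 ⟨a, Finset.mem_filter.2 ⟨Finset.mem_biUnion.2 ⟨p, hp, ?_⟩, ha⟩, rfl⟩
    exact Finset.mem_image.2 ⟨_, hb, rfl⟩
  refine ⟨q, ?_, ?_, ?_⟩
  · intro r hr
    obtain ⟨a, ha, rfl⟩ := Finset.mem_image.1 hr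
    exact (Finset.mem_filter.1 ha).2
  · intro r hr
    obtain ⟨a, ha, rfl⟩ := Finset.mem_image.1 hr
    rfl
  · have : cyl q ⊆ ⋃ p : T, cyl p.1.1 := by
      intro z hz
      let z' : ι → Bool := fun a => if a < ξ then y a else z a
      have hz' : z' ∈ sat ξ {y} := ⟨y, rfl, fun a ha => by simp [z', ha]⟩
      have := hT hz'
      simp only [mem_iUnion] at this
      obtain ⟨p, hp, hzp⟩ := this
      refine mem_iUnion.2 ⟨⟨p, hp⟩, ?_⟩
      rintro ⟨a, b⟩ hab
      have h1 := hzp _ hab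
      by_cases ha : a < ξ
      · have h2 := hz _ (hq a ha p hp b hab)
        simp only [z', ha, if_true] at h1 h2 ⊢
        exact h2.trans h1
      · simpa [z', ha] using h1
    exact hG.sig.mono this (hG.sig.iUn _ fun p => p.1.2)

theorem luzin [Om ι] {Z : Set (ι → Bool)} (E : ι → Set (ι → Bool)) (h1 : Z ⊆ ⋃ β, E β)
    (h2 : ∀ α, ¬ Z ⊆ ⋃ β, ⋃ (_ : β < α), E β) :
    ∃ A ⊆ Z, ¬ A.Countable ∧ ∀ β, (A ∩ E β).Countable := by
  have h3 : ∀ α, ∃ x, x ∈ Z ∧ ∀ β < α, x ∉ E β := by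
    intro α
    obtain ⟨x, hx, hn⟩ := not_subset.1 (h2 α)
    refine ⟨x, hx, fun β hβ hm => hn ?_⟩
    exact mem_iUnion₂.2 ⟨β, hβ, hm⟩
  choose x hx hn using h3
  refine ⟨range x, range_subset_iff.2 hx, fun hc => ?_, fun β => ?_⟩
  · have h4 : ∀ z : range x, ∃ β, z.1 ∈ E β := by
      rintro ⟨_, a, rfl⟩
      exact mem_iUnion.1 (h1 (hx a))
    choose b hb using h4
    have : Countable (range x) := hc
    obtain ⟨α, hα⟩ := bdd (countable_range b)
    exact hn α _ (hα _ ⟨⟨x α, α, rfl⟩, rfl⟩) (hb ⟨x α, α, rfl⟩)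
  · have : range x ∩ E β ⊆ x '' Iic β := by
      rintro _ ⟨⟨a, rfl⟩, h⟩
      refine ⟨a, ?_, rfl⟩
      by_contra hlt
      exact hn a β (not_le.1 hlt) h
    refine Countable.mono this (Countable.image ?_ _)
    rw [← Iio_insert]; exact (Om.ctb β).insert β


def VV (Good : Set (ι → Bool) → Prop) (ε : ι) : Set (ι → Bool) :=
  {y | ∃ p, SL ε p ∧ y ∈ cyl p ∧ Good (cyl p)}

theorem good_VV [Om ι] {Good : Set (ι → Bool) → Prop} (h : Sig Good) (ε : ι) : Good (VV Good ε) := by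
  have h1 : (cyl '' {p : Finset (ι × Bool) | SL ε p ∧ Good (cyl p)}).Countable :=
    ((countable_SL ε).mono fun p hp => hp.1).image _
  refine h.mono ?_ (h.un _ h1 ?_)
  · rintro y ⟨p, hp, hy, hg⟩
    exact ⟨cyl p, ⟨p, ⟨hp, hg⟩, rfl⟩, hy⟩
  · rintro _ ⟨p, hp, rfl⟩
    exact hp.2

theorem CS_VV {Good : Set (ι → Bool) → Prop} (ε : ι) : CS ε (VV Good ε)ᶜ := by
  intro z hz
  obtain ⟨p, h1, h2, h3⟩ := not_not.1 hz
  refine ⟨p, h1, h2, Set.disjoint_left.2 fun y hy hy' => hy' ⟨p, h1, hy, h3⟩⟩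

theorem CS_empty (ε : ι) : CS ε (∅ : Set (ι → Bool)) := fun z _ =>
  ⟨∅, by simp [SL], by simp [cyl], by simp⟩

theorem lemS [Om ι] {c : ι → ℕ → Finset (ι × Bool)} (hc : Function.Surjective c)
    {Z : Set (ι → Bool)} (hZ : HZ Z) (ε : ι) :
    ∃ F : ℕ → Set (ι → Bool), (∀ n, CS ε (F n)) ∧ (∀ n, F n ⊆ sat ε Z) ∧ sat ε Z ⊆ ⋃ n, F n := by
  by_contra hcon
  let P : ι → Prop := fun β => CS ε (gc (c β)) ∧ gc (c β) ⊆ sat ε Z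
  let E : ι → Set (ι → Bool) := fun β => {y | P β ∧ y ∈ gc (c β)}
  have hE : ∀ β, CS ε (E β) := by
    intro β
    by_cases h : P β
    · have : E β = gc (c β) := by ext y; simp [E, h]
      rw [this]; exact h.1
    · have : E β = ∅ := by ext y; simp [E, h]
      rw [this]; exact CS_empty ε
  have hE2 : ∀ β, E β ⊆ sat ε Z := fun β y hy => hy.1.2 hy.2
  obtain ⟨A, hAZ, hAu, hAE⟩ := luzin (Z := Z) E (by
      intro z hz
      have h1 := sat_CS (H := {z}) isCompact_singleton ε
      obtain ⟨c', hc'⟩ := code h1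
      obtain ⟨β, rfl⟩ := hc c'
      refine mem_iUnion.2 ⟨β, ⟨?_, ?_⟩, ?_⟩
      · rw [hc']; exact h1
      · rw [hc']
        rintro y ⟨x, rfl, hy⟩
        exact ⟨x, hz, hy⟩
      · rw [hc']; exact subset_sat _ _ rfl) (by
    intro α hα
    apply hcon
    obtain ⟨F, hF⟩ := (((Om.ctb α).image E).insert ∅).exists_eq_range (insert_nonempty _ _)
    have hF' : ∀ n, F n = ∅ ∨ ∃ β < α, E β = F n := by
      intro n
      have : F n ∈ insert ∅ (E '' Iio α) := hF ▸ mem_range_self n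
      rcases this with h | ⟨β, hβ, h⟩
      · exact Or.inl h
      · exact Or.inr ⟨β, hβ, h⟩
    refine ⟨F, fun n => ?_, fun n => ?_, ?_⟩
    · rcases hF' n with h | ⟨β, hβ, h⟩
      · rw [h]; exact CS_empty ε
      · rw [← h]; exact hE β
    · rcases hF' n with h | ⟨β, hβ, h⟩
      · rw [h]; exact empty_subset _
      · rw [← h]; exact hE2 β
    · rintro y ⟨z, hz, hyz⟩
      obtain ⟨β, hβ, hzE⟩ := mem_iUnion₂.1 (hα hz)
      have : E β ∈ range F := hF ▸ Or.inr ⟨β, hβ, rfl⟩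
      obtain ⟨n, hn⟩ := this
      exact mem_iUnion.2 ⟨n, hn ▸ (hE β).satd hyz hzE⟩)
  obtain ⟨Good, hG⟩ := lemL (D := (sat ε Z)ᶜ) hZ hAZ hAu (fun d hd hdZ => hd (subset_sat _ _ hdZ))
  have hV : (sat ε Z)ᶜ ⊆ VV Good ε := by
    intro y hy
    apply lemT hG
    rintro x ⟨_, rfl, hx⟩ hx'
    exact hy (sat_satd (fun a ha => (hx a ha).symm) hx')
  obtain ⟨c', hc'⟩ := code (CS_VV (Good := Good) ε)
  obtain ⟨β, rfl⟩ := hc c'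
  have hβ : P β := ⟨hc' ▸ CS_VV ε, hc' ▸ compl_subset_comm.1 hV⟩
  apply hG.not
  refine hG.sig.mono ?_ (hG.sig.union (good_VV hG.sig ε) (hG.ctbl (hAE β)))
  rintro y (hy | hy)
  · by_cases hyV : y ∈ VV Good ε
    · exact Or.inl hyV
    · exact Or.inr ⟨hy, hβ, hc' ▸ hyV⟩
  · exact Or.inl (hV hy)

theorem nonempt [Om ι] : Nonempty ι := by
  by_contra hne
  rw [not_nonempty_iff] at hne
  exact Om.unc (ι := ι) (countable_univ)

theorem engPt : EngLindelofSp PUnit.{u+1} := by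
  refine ⟨inferInstance, inferInstance, fun 𝒰 _ h2 => ?_⟩
  have : PUnit.unit ∈ ⋃₀ 𝒰 := h2 ▸ mem_univ _
  obtain ⟨U, hU, hm⟩ := this
  exact ⟨{U}, by simpa using hU, countable_singleton _, eq_univ_iff_forall.2 fun _ => ⟨U, rfl, hm⟩⟩

theorem gdc [Om ι] {Z : Set (ι → Bool)} (hZ : HZ Z) {y : ι → Bool} (hy : ∀ ε, y ∈ sat ε Z) : y ∈ Z := by
  by_contra hyZ
  have hq := hZ PUnit.{u+1} engPt
  let N : ι → Set (Z × PUnit.{u+1}) := fun a => {w | w.1.1 a ≠ y a}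
  obtain ⟨𝒱, h1, h2, h3⟩ := hq (range N) (by
    rintro _ ⟨a, rfl⟩
    have : IsOpen ((fun w : Z × PUnit.{u+1} => w.1.1 a) ⁻¹' {y a}ᶜ) :=
      (isOpen_discrete _).preimage ((continuous_apply a).comp (continuous_subtype_val.comp continuous_fst))
    exact this) (by
    rw [eq_univ_iff_forall]
    intro w
    have : w.1.1 ≠ y := fun h => hyZ (h ▸ w.1.2)
    obtain ⟨a, ha⟩ := Function.ne_iff.1 this
    exact ⟨N a, ⟨a, rfl⟩, ha⟩)
  have h4 : ∀ V ∈ 𝒱, ∃ a, N a = V := fun V hV => h1 hV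
  have := nonempt (ι := ι)
  choose! g hg using h4
  obtain ⟨ε, hε⟩ := bdd (h2.image g)
  obtain ⟨z, hz, hyz⟩ := hy ε
  have : ((⟨z, hz⟩, PUnit.unit) : Z × PUnit.{u+1}) ∈ ⋃₀ 𝒱 := h3 ▸ mem_univ _
  obtain ⟨V, hV, hm⟩ := this
  rw [← hg V hV] at hm
  exact hm (hyz _ (hε _ ⟨V, hV, rfl⟩)).symm

theorem baire [Om ι] {ε : ι} {C : Set (ι → Bool)} (hC : IsClosed C) {F G : ℕ → Set (ι → Bool)}
    (hF : ∀ n, CS ε (F n)) (hG : ∀ n, CS ε (G n)) (hne : (C \ ⋃ n, G n).Nonempty)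
    (hsub : C \ ⋃ n, G n ⊆ ⋃ n, F n) :
    ∃ p, SL ε p ∧ ∃ m, (cyl p ∩ (C \ ⋃ n, G n)).Nonempty ∧ cyl p ∩ (C \ ⋃ n, G n) ⊆ F m := by
  classical
  by_contra hcon
  push Not at hcon
  let R := {p : Finset (ι × Bool) // SL ε p ∧ (cyl p ∩ (C \ ⋃ n, G n)).Nonempty}
  have step : ∀ (n : ℕ) (r : R), ∃ r' : R, cyl r'.1 ⊆ cyl r.1 ∧ Disjoint (cyl r'.1) (F n) ∧
      Disjoint (cyl r'.1) (G n) := by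
    rintro n ⟨p, hp, hpn⟩
    obtain ⟨y, hy, hyF⟩ := not_subset.1 (hcon p hp n hpn)
    have hyG : y ∉ G n := fun h => hy.2.2 (mem_iUnion.2 ⟨n, h⟩)
    obtain ⟨p1, a1, a2, a3⟩ := hF n y hyF
    obtain ⟨p2, b1, b2, b3⟩ := hG n y hyG
    refine ⟨⟨p ∪ (p1 ∪ p2), hp.union (a1.union b1), y, ?_, hy.2⟩, ?_, ?_, ?_⟩
    · rw [cyl_union, cyl_union]; exact ⟨hy.1, a2, b2⟩
    · rw [cyl_union]; exact inter_subset_left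
    · rw [cyl_union, cyl_union]; exact a3.mono_left (fun _ h => h.2.1)
    · rw [cyl_union, cyl_union]; exact b3.mono_left (fun _ h => h.2.2)
  choose nx n1 n2 n3 using step
  let r0 : R := ⟨∅, by simp [SL], by simpa [cyl] using hne⟩
  let s : ℕ → R := fun n => Nat.rec r0 (fun n r => nx n r) n
  have hs : ∀ n, s (n+1) = nx n (s n) := fun n => rfl
  have hcl : ∀ n, IsClosed (cyl (s n).1 ∩ C) := fun n => (isClopen_cyl _).isClosed.inter hC
  obtain ⟨y, hy⟩ := IsCompact.nonempty_iInter_of_sequence_nonempty_isCompact_isClosed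
    (fun n => cyl (s n).1 ∩ C)
    (fun n => by
      rw [hs]; exact inter_subset_inter_left _ (n1 _ _))
    (fun n => (s n).2.2.mono (fun x hx => ⟨hx.1, hx.2.1⟩)) (hcl 0).isCompact hcl
  rw [mem_iInter] at hy
  have hyG : y ∉ ⋃ n, G n := by
    intro h
    obtain ⟨n, hn⟩ := mem_iUnion.1 h
    have := (hy (n+1)).1
    rw [hs] at this
    exact (n3 n (s n)).le_bot ⟨this, hn⟩
  obtain ⟨n, hn⟩ := mem_iUnion.1 (hsub ⟨(hy 0).2, hyG⟩)
  have := (hy (n+1)).1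
  rw [hs] at this
  exact (n2 n (s n)).le_bot ⟨this, hn⟩

theorem fodor [Om ι] (f : ι → Finset (ι × Bool)) (hf : ∀ ε, SL ε (f ε)) :
    ∃ p, ∀ γ, ∃ ε, γ < ε ∧ f ε = p := by
  by_contra hcon
  push Not at hcon
  choose b hb using hcon
  have hwf : WellFoundedLT ι := Om.wf
  have h1 : ∀ δ : ι, ∃ δ', δ < δ' ∧ ∀ p, SL δ p → b p < δ' := by
    intro δ
    obtain ⟨δ', h⟩ := bdd (((countable_SL δ).image b).insert δ)
    exact ⟨δ', h _ (mem_insert _ _), fun p hp => h _ (Or.inr ⟨p, hp, rfl⟩)⟩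
  choose g g1 g2 using h1
  have := nonempt (ι := ι)
  let s : ℕ → ι := fun n => Nat.rec (Classical.arbitrary ι) (fun _ r => g r) n
  have hs : ∀ n, s (n+1) = g (s n) := fun n => rfl
  have hsm : StrictMono s := strictMono_nat_of_lt_succ fun n => by rw [hs]; exact g1 _
  have hne : {δ | ∀ n, s n < δ}.Nonempty := by
    obtain ⟨d, hd⟩ := bdd (countable_range s)
    exact ⟨d, fun n => hd _ ⟨n, rfl⟩⟩
  let δ := hwf.wf.min _ hne
  have hδ : ∀ n, s n < δ := hwf.wf.min_mem _ hne
  have hδ2 : ∀ a < δ, ∃ n, a ≤ s n := by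
    intro a ha
    by_contra! h
    exact hwf.wf.not_lt_min {δ | ∀ n, s n < δ} (x := a) h ha
  have h2 : ∀ p : Finset (ι × Bool), SL δ p → ∃ n, SL (s n) p := by
    classical
    intro p
    induction p using Finset.induction_on with
    | empty => intro _; exact ⟨0, by simp [SL]⟩
    | insert q p _ ih =>
      intro hp
      obtain ⟨n, hn⟩ := ih fun a ha => hp a (Finset.mem_insert_of_mem ha)
      obtain ⟨m, hm⟩ := hδ2 q.1 (hp q (Finset.mem_insert_self _ _))
      refine ⟨max n m + 1, fun a ha => ?_⟩
      rcases Finset.mem_insert.1 ha with rfl | ha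
      · exact hm.trans_lt (hsm (show m < max n m + 1 by omega))
      · exact (hn a ha).trans (hsm (show n < max n m + 1 by omega))
  obtain ⟨n, hn⟩ := h2 (f δ) (hf δ)
  exact hb (f δ) δ ((g2 _ _ hn).trans (hδ (n+1))) rfl


theorem thmA [Om ι] {c : ι → ℕ → Finset (ι × Bool)} (hc : Function.Surjective c)
    {Z : Set (ι → Bool)} (hZ : HZ Z) {Small : Set (ι → Bool) → Prop} (hS : Sig Small)
    (Hc : ∀ C ⊆ Z, IsCompact C → ∃ γ, Small (sat γ C)) : Small Z := by
  by_contra hn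
  let E : ι → Set (ι → Bool) := fun β => {y | Small (gc (c β)) ∧ y ∈ gc (c β)}
  have hE : ∀ β, Small (E β) := by
    intro β
    by_cases h : Small (gc (c β))
    · exact hS.mono (fun y hy => hy.2) h
    · exact hS.mono (fun y hy => (h hy.1).elim) hS.empty
  obtain ⟨A, hAZ, hAu, hAE⟩ := luzin (Z := Z) E (by
      intro z hz
      obtain ⟨γ, hγ⟩ := Hc {z} (by simpa using hz) isCompact_singleton
      obtain ⟨c', hc'⟩ := code (sat_CS (H := {z}) isCompact_singleton γ)
      obtain ⟨β, rfl⟩ := hc c'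
      exact mem_iUnion.2 ⟨β, hc' ▸ hγ, hc' ▸ subset_sat _ _ rfl⟩) (by
    intro α hα
    apply hn
    have : Countable (Iio α) := Om.ctb α
    refine hS.mono ?_ (hS.iUn (fun β : Iio α => E β.1) fun β => hE β.1)
    intro z hz
    obtain ⟨β, hβ, hzE⟩ := mem_iUnion₂.1 (hα hz)
    exact mem_iUnion.2 ⟨⟨β, hβ⟩, hzE⟩)
  let P : ι → ι → Prop := fun ξ β => β < ξ ∧ Small (gc (c β)) ∧ CS ξ (gc (c β))
  let S : ι → Set (ι → Bool) := fun ξ => {y | ∃ β, P ξ β ∧ y ∈ gc (c β)}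
  have Smono : ∀ {ξ η}, ξ ≤ η → S ξ ⊆ S η := by
    rintro ξ η h y ⟨β, ⟨h1, h2, h3⟩, hy⟩
    exact ⟨β, ⟨h1.trans_le h, h2, h3.mono h⟩, hy⟩
  have Ssat : ∀ {ξ} {y z : ι → Bool}, (∀ a < ξ, y a = z a) → z ∈ S ξ → y ∈ S ξ := by
    rintro ξ y z hyz ⟨β, h, hz⟩
    exact ⟨β, h, h.2.2.satd hyz hz⟩
  have Senum : ∀ ξ, ∃ G : ℕ → Set (ι → Bool), (∀ n, CS ξ (G n)) ∧ ⋃ n, G n = S ξ := by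
    intro ξ
    have hct : {β | P ξ β}.Countable := (Om.ctb ξ).mono fun β h => h.1
    obtain ⟨G, hG⟩ := ((hct.image (fun β => gc (c β))).insert ∅).exists_eq_range (insert_nonempty _ _)
    refine ⟨G, fun n => ?_, ?_⟩
    · have : G n ∈ insert ∅ ((fun β => gc (c β)) '' {β | P ξ β}) := hG ▸ mem_range_self n
      rcases this with h | ⟨β, hβ, h⟩
      · rw [h]; exact CS_empty ξ
      · rw [← h]; exact hβ.2.2
    · rw [← sUnion_range, ← hG]
      ext y
      constructor
      · rintro ⟨_, rfl | ⟨β, hβ, rfl⟩, hy⟩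
        · exact hy.elim
        · exact ⟨β, hβ, hy⟩
      · rintro ⟨β, hβ, hy⟩
        exact ⟨_, Or.inr ⟨β, hβ, rfl⟩, hy⟩
  have SA : ∀ ξ, (A ∩ S ξ).Countable := by
    intro ξ
    have : A ∩ S ξ ⊆ ⋃ β ∈ Iio ξ, A ∩ E β := by
      rintro y ⟨hy, β, hβ, hyβ⟩
      exact mem_biUnion (x := β) hβ.1 ⟨hy, hβ.2.1, hyβ⟩
    exact ((Om.ctb ξ).biUnion fun β _ => hAE β).mono this
  let D : Set (ι → Bool) := {y | ∃ ξ, y ∉ sat ξ Z ∧ y ∉ S ξ}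
  obtain ⟨Good, hG⟩ := lemL (D := D) hZ hAZ hAu (by
    rintro d ⟨ξ, h, -⟩ hd
    exact h (subset_sat _ _ hd))
  have hT : ∀ ξ y, y ∉ sat ξ Z → y ∉ S ξ → y ∈ VV Good ξ := by
    intro ξ y h1 h2
    apply lemT hG
    rintro x ⟨_, rfl, hx⟩
    exact ⟨ξ, fun h => h1 (sat_satd (fun a ha => (hx a ha).symm) h),
      fun h => h2 (Ssat (fun a ha => (hx a ha).symm) h)⟩
  have Vmono : ∀ {ξ η}, ξ ≤ η → VV Good ξ ⊆ VV Good η := by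
    rintro ξ η h y ⟨p, hp, h1⟩
    exact ⟨p, hp.mono h, h1⟩
  have main1 : ∀ ε, ∃ p, SL ε p ∧ ∃ F, IsClosed F ∧ F ⊆ sat ε Z ∧
      (cyl p ∩ ((VV Good ε)ᶜ \ S ε)).Nonempty ∧ cyl p ∩ ((VV Good ε)ᶜ \ S ε) ⊆ F := by
    intro ε
    obtain ⟨F, hF1, hF2, hF3⟩ := lemS hc hZ ε
    obtain ⟨G, hG1, hG2⟩ := Senum ε
    have hne : ((VV Good ε)ᶜ \ ⋃ n, G n).Nonempty := by
      rw [hG2]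
      by_contra hem
      rw [not_nonempty_iff_eq_empty, sdiff_eq_empty] at hem
      apply hG.not
      refine hG.sig.mono ?_ (hG.sig.union (good_VV hG.sig ε) (hG.ctbl (SA ε)))
      intro y hy
      by_cases hyV : y ∈ VV Good ε
      · exact Or.inl hyV
      have hyS : y ∈ S ε := hem hyV
      rcases hy with hy | ⟨ξ, h1, h2⟩
      · exact Or.inr ⟨hy, hyS⟩
      · rcases le_total ε ξ with h | h
        · exact (h2 (Smono h hyS)).elim
        · exact (hyV (Vmono h (hT ξ y h1 h2))).elim
    obtain ⟨p, hp, m, h1, h2⟩ := baire (CS_VV (Good := Good) ε).closed hF1 hG1 hne (by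
      rw [hG2]
      rintro y ⟨h1, h2⟩
      apply hF3
      by_contra h3
      exact h1 (hT ε y h3 h2))
    rw [hG2] at h1 h2
    exact ⟨p, hp, F m, (hF1 m).closed, hF2 m, h1, h2⟩
  choose f hf F hF1 hF2 hne hsub using main1
  obtain ⟨p, hp⟩ := fodor f hf
  let Q : ι → Set (ι → Bool) := fun ε => closure (cyl p ∩ ((VV Good ε)ᶜ \ S ε))
  have Qanti : ∀ {ξ η}, ξ ≤ η → Q η ⊆ Q ξ := by
    intro ξ η h
    apply closure_mono
    rintro y ⟨h1, h2, h3⟩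
    exact ⟨h1, fun hv => h2 (Vmono h hv), fun hs => h3 (Smono h hs)⟩
  have hQZ : ∀ ε, f ε = p → Q ε ⊆ sat ε Z := by
    rintro ε rfl
    exact (closure_minimal (hsub ε) (hF1 ε)).trans (hF2 ε)
  have hQne : ∀ ε, (Q ε).Nonempty := by
    intro ε
    obtain ⟨ε', h1, h2⟩ := hp ε
    have := hne ε'
    rw [h2] at this
    exact this.closure.mono (Qanti h1.le)
  let H : Set (ι → Bool) := ⋂ ε, Q ε
  have hHcl : IsClosed H := isClosed_iInter fun ε => isClosed_closure
  have hHZ : H ⊆ Z := by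
    intro y hy
    apply gdc hZ
    intro ε
    obtain ⟨ε', h1, h2⟩ := hp ε
    exact sat_anti h1.le _ (hQZ ε' h2 (mem_iInter.1 hy ε'))
  obtain ⟨γ, hγ⟩ := Hc H hHZ hHcl.isCompact
  have hcs := sat_CS hHcl.isCompact γ
  obtain ⟨c', hc'⟩ := code hcs
  obtain ⟨β, rfl⟩ := hc c'
  have hNe := nonempt (ι := ι)
  have h1 : ∀ n, ∃ ε, Disjoint (Q ε) (cyl (c β n)) := by
    intro n
    by_contra! hcon
    have := IsCompact.nonempty_iInter_of_directed_nonempty_isCompact_isClosed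
      (fun ε => Q ε ∩ cyl (c β n))
      (by
        intro a b
        exact ⟨max a b, inter_subset_inter_left _ (Qanti (le_max_left _ _)),
          inter_subset_inter_left _ (Qanti (le_max_right _ _))⟩)
      (fun ε => Set.not_disjoint_iff_nonempty_inter.1 (hcon ε))
      (fun ε => (isClosed_closure.inter (isClopen_cyl _).isClosed).isCompact)
      (fun ε => isClosed_closure.inter (isClopen_cyl _).isClosed)
    obtain ⟨y, hy⟩ := this
    rw [mem_iInter] at hy
    have hyH : y ∈ H := mem_iInter.2 fun ε => (hy ε).1
    have : y ∈ gc (c β) := hc' ▸ subset_sat γ _ hyH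
    exact this n (hy γ).2
  choose e he using h1
  obtain ⟨δ, hδ⟩ := bdd (((countable_range e).insert β).insert γ)
  obtain ⟨ε, hε, hfε⟩ := hp δ
  obtain ⟨y, hy⟩ := hne ε
  rw [hfε] at hy
  apply hy.2.2
  refine ⟨β, ⟨(hδ β (by simp)).trans hε, hc' ▸ hγ, ?_⟩, ?_⟩
  · rw [hc']; exact hcs.mono ((hδ γ (by simp)).trans hε).le
  · intro n hn
    have : e n ≤ ε := ((hδ (e n) (by simp)).trans hε).le
    exact (he n).le_bot ⟨Qanti this (subset_closure hy), hn⟩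


def bx (q : Finset (ℕ × ι)) : Set (ℕ → ι → Bool) := {z | ∀ r ∈ q, z r.1 r.2 = true}

def Cov (Z : Set (ι → Bool)) (𝒬 : Set (Finset (ℕ × ι))) (B : Set (ℕ → ι → Bool)) : Prop :=
  ∃ 𝒬' ⊆ 𝒬, 𝒬'.Countable ∧ ∀ z ∈ B, (∀ n, z n ∈ Z) → ∃ q ∈ 𝒬', z ∈ bx q

theorem sigCov (Z : Set (ι → Bool)) (𝒬 : Set (Finset (ℕ × ι))) : Sig (Cov Z 𝒬) := by
  constructor
  · rintro A B h ⟨𝒬', h1, h2, h3⟩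
    exact ⟨𝒬', h1, h2, fun z hz => h3 z (h hz)⟩
  · intro 𝒮 hS h
    choose! f h1 h2 h3 using h
    refine ⟨⋃ S ∈ 𝒮, f S, iUnion₂_subset h1, hS.biUnion h2, ?_⟩
    rintro y ⟨S, hS, hy⟩ hyZ
    obtain ⟨V, hV, hyV⟩ := h3 S hS y hy hyZ
    exact ⟨V, mem_biUnion hS hV, hyV⟩

def Pos (Z : Set (ι → Bool)) (𝒬 : Set (Finset (ℕ × ι))) (n : ℕ) (H : ℕ → Set (ι → Bool)) : Prop :=
  (∀ i < n, IsCompact (H i) ∧ H i ⊆ Z) ∧ ∀ γ, ¬ Cov Z 𝒬 {z | ∀ i < n, z i ∈ sat γ (H i)}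

theorem pos_ext [Om ι] {c : ι → ℕ → Finset (ι × Bool)} (hc : Function.Surjective c)
    {Z : Set (ι → Bool)} (hZ : HZ Z) {𝒬 : Set (Finset (ℕ × ι))} {n : ℕ} {H : ℕ → Set (ι → Bool)}
    (h : Pos Z 𝒬 n H) : ∃ C, Pos Z 𝒬 (n+1) (Function.update H n C) := by
  let Small : Set (ι → Bool) → Prop := fun B => ∃ γ, Cov Z 𝒬 {z | (∀ i < n, z i ∈ sat γ (H i)) ∧ z n ∈ B}
  have hS : Sig Small := by
    constructor
    · rintro A B hAB ⟨γ, hγ⟩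
      exact ⟨γ, (sigCov Z 𝒬).mono (fun z hz => (show _ ∧ _ from ⟨hz.1, hAB hz.2⟩)) hγ⟩
    · intro 𝒮 hS hh
      have := nonempt (ι := ι)
      choose! g hg using hh
      obtain ⟨γ, hγ⟩ := bdd (hS.image g)
      refine ⟨γ, (sigCov Z 𝒬).mono ?_ ((sigCov Z 𝒬).un
        ((fun S => {z | (∀ i < n, z i ∈ sat (g S) (H i)) ∧ z n ∈ S}) '' 𝒮) (hS.image _) ?_)⟩
      · rintro z ⟨hz, S, hS, hzS⟩
        refine ⟨_, ⟨S, hS, rfl⟩, fun i hi => ?_, hzS⟩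
        exact sat_anti (hγ _ ⟨S, hS, rfl⟩).le _ (hz i hi)
      · rintro _ ⟨S, hS, rfl⟩
        exact hg S hS
  have hex : ∃ C ⊆ Z, IsCompact C ∧ ∀ γ, ¬ Small (sat γ C) := by
    by_contra! hcon
    obtain ⟨γ, 𝒬', h1, h2, h3⟩ := thmA hc hZ hS hcon
    exact h.2 γ ⟨𝒬', h1, h2, fun z hz hzZ => h3 z ⟨hz, hzZ n⟩ hzZ⟩
  obtain ⟨C, hCZ, hCc, hC⟩ := hex
  refine ⟨C, fun i hi => ?_, fun γ hγ => ?_⟩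
  · by_cases hin : i = n
    · subst hin; simpa using ⟨hCc, hCZ⟩
    · simpa [hin] using h.1 i (by omega)
  · apply hC γ
    refine ⟨γ, (sigCov Z 𝒬).mono ?_ hγ⟩
    rintro z ⟨h1, h2⟩ i hi
    by_cases hin : i = n
    · subst hin; simpa using h2
    · simpa [hin] using h1 i (by omega)

theorem power [Om ι] {c : ι → ℕ → Finset (ι × Bool)} (hc : Function.Surjective c)
    {Z : Set (ι → Bool)} (hZ : HZ Z) {𝒬 : Set (Finset (ℕ × ι))}
    (hcov : ∀ z : ℕ → ι → Bool, (∀ n, z n ∈ Z) → ∃ q ∈ 𝒬, z ∈ bx q) : Cov Z 𝒬 univ := by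
  by_contra hcon
  have hp0 : Pos Z 𝒬 0 (fun _ => ∅) := ⟨by simp, fun γ h => hcon ((sigCov Z 𝒬).mono (by intro z _; simp) h)⟩
  have step : ∀ n H, ∃ C, Pos Z 𝒬 n H → Pos Z 𝒬 (n+1) (Function.update H n C) := by
    intro n H
    by_cases h : Pos Z 𝒬 n H
    · obtain ⟨C, hC⟩ := pos_ext hc hZ h
      exact ⟨C, fun _ => hC⟩
    · exact ⟨∅, fun h' => (h h').elim⟩
  choose C hC using step
  let s : ℕ → ℕ → Set (ι → Bool) := fun n => Nat.rec (fun _ => ∅) (fun n H => Function.update H n (C n H)) n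
  have hs : ∀ n, s (n+1) = Function.update (s n) n (C n (s n)) := fun n => rfl
  have hpos : ∀ n, Pos Z 𝒬 n (s n) := by
    intro n
    induction n with
    | zero => exact hp0
    | succ n ih => rw [hs]; exact hC _ _ ih
  let H : ℕ → Set (ι → Bool) := fun i => s (i+1) i
  have hag : ∀ n, ∀ i < n, s n i = H i := by
    intro n
    induction n with
    | zero => intro i hi; omega
    | succ n ih =>
      intro i hi
      by_cases hin : i = n
      · subst hin; rfl
      · rw [hs, Function.update_of_ne hin]; exact ih i (by omega)
  have hpos' : ∀ n γ, ¬ Cov Z 𝒬 {z | ∀ i < n, z i ∈ sat γ (H i)} := by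
    intro n γ h
    refine (hpos n).2 γ ((sigCov Z 𝒬).mono ?_ h)
    intro z hz i hi
    rw [← hag n i hi]; exact hz i hi
  have hHc : ∀ i, IsCompact (H i) ∧ H i ⊆ Z := fun i => (hpos (i+1)).1 i (by omega)
  have hNe := nonempt (ι := ι)
  have hHne : ∀ i, (H i).Nonempty := by
    intro i
    by_contra hem
    rw [not_nonempty_iff_eq_empty] at hem
    obtain ⟨γ⟩ := hNe
    refine hpos' (i+1) γ ((sigCov Z 𝒬).mono ?_ (sigCov Z 𝒬).empty)
    intro z hz
    have := hz i (by omega)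
    rw [hem] at this
    obtain ⟨x, hx, -⟩ := this
    exact hx.elim
  have hcomp := isCompact_univ_pi fun i => (hHc i).1
  obtain ⟨T, hT⟩ := hcomp.elim_finite_subcover (fun q : 𝒬 => bx q.1) (by
      intro q
      have : bx q.1 = ⋂ r ∈ q.1, (fun z : ℕ → ι → Bool => z r.1 r.2) ⁻¹' {true} := by
        ext z; simp [bx]
      rw [this]
      exact isOpen_biInter_finset fun r _ => (isOpen_discrete _).preimage (by fun_prop))
    (by
      intro z hz
      obtain ⟨q, hq, hzq⟩ := hcov z fun n => (hHc n).2 (hz n trivial)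
      exact mem_iUnion.2 ⟨⟨q, hq⟩, hzq⟩)
  have hfin : (⋃ q ∈ T, (q.1 : Set (ℕ × ι))).Finite := T.finite_toSet.biUnion fun q _ => q.1.finite_toSet
  obtain ⟨N, hN⟩ := (hfin.image Prod.fst).bddAbove
  obtain ⟨γ, hγ⟩ := bdd (hfin.image Prod.snd).countable
  apply hpos' (N+1) γ
  refine ⟨Subtype.val '' (T : Set 𝒬), by simp, (T.finite_toSet.image _).countable, ?_⟩
  intro z hz _
  have : ∀ i, ∃ h ∈ H i, i < N + 1 → ∀ a < γ, z i a = h a := by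
    intro i
    by_cases hi : i < N + 1
    · obtain ⟨x, hx, hzx⟩ := hz i hi
      exact ⟨x, hx, fun _ => hzx⟩
    · obtain ⟨x, hx⟩ := hHne i
      exact ⟨x, hx, fun h => (hi h).elim⟩
  choose h hh hzh using this
  have := hT (show h ∈ univ.pi H from fun i _ => hh i)
  simp only [mem_iUnion] at this
  obtain ⟨q, hq, hhq⟩ := this
  refine ⟨q.1, ⟨q, hq, rfl⟩, fun r hr => ?_⟩
  have hm : r ∈ ⋃ q ∈ T, (q.1 : Set (ℕ × ι)) := mem_biUnion (x := q) hq hr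
  have h1 : r.1 ≤ N := hN ⟨r, hm, rfl⟩
  have h2 : r.2 < γ := hγ _ ⟨r, hm, rfl⟩
  rw [hzh r.1 (by omega) r.2 h2]
  exact hhq r hr

def ZZ {X : Type u} (W : ι → Set X) : Set (ι → Bool) := {T | ∃ x, ∀ α, x ∈ W α → T α = true}

theorem lem1 {X : Type u} [TopologicalSpace X] {W : ι → Set X} (hW : ∀ α, IsOpen (W α))
    (hX : ProductivelyQuasiLindelofSp X) : HZ (ZZ W) := by
  classical
  intro Y _ hY
  have hq := hX Y hY
  intro 𝒪 hO hOu
  let Rp : Finset ι → Set Y → Set (Set (ZZ W × Y)) → Prop := fun F V 𝒪' =>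
    IsOpen V ∧ 𝒪' ⊆ 𝒪 ∧ 𝒪'.Finite ∧ ∀ (z : ZZ W), (∀ α ∈ F, z.1 α = true) → ∀ y ∈ V, (z, y) ∈ ⋃₀ 𝒪'
  obtain ⟨𝓡, h1, h2, h3⟩ := hq {R | ∃ F V 𝒪', Rp F V 𝒪' ∧ R = (⋂ α ∈ F, W α) ×ˢ V}
    (by
      rintro _ ⟨F, V, 𝒪', h, rfl⟩
      exact (isOpen_biInter_finset fun α _ => hW α).prod h.1)
    (by
      rw [eq_univ_iff_forall]
      rintro ⟨x, y⟩
      let P : Set (ι → Bool) := {T | ∀ α, x ∈ W α → T α = true}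
      have hP : IsCompact P := by
        apply IsClosed.isCompact
        have : P = ⋂ α, ⋂ (_ : x ∈ W α), (fun T : ι → Bool => T α) ⁻¹' {true} := by
          ext T; simp [P]
        rw [this]
        exact isClosed_iInter fun α => isClosed_iInter fun _ =>
          (isClosed_discrete _).preimage (continuous_apply α)
      have hPZ : P ⊆ ZZ W := fun T hT => ⟨x, hT⟩
      have hloc : ∀ T ∈ P, ∃ (p : Finset (ι × Bool)) (V : Set Y) (O : Set (ZZ W × Y)), T ∈ cyl p ∧ IsOpen V ∧ y ∈ V ∧
          O ∈ 𝒪 ∧ ∀ z : ZZ W, z.1 ∈ cyl p → ∀ y' ∈ V, (z, y') ∈ O := by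
        intro T hT
        have : ((⟨T, hPZ hT⟩, y) : ZZ W × Y) ∈ ⋃₀ 𝒪 := hOu ▸ mem_univ _
        obtain ⟨O, hO1, hO2⟩ := this
        obtain ⟨U, V, hU, hV, mU, mV, hUV⟩ := isOpen_prod_iff.1 (hO O hO1) _ _ hO2
        obtain ⟨U', hU', rfl⟩ := isOpen_induced_iff.1 hU
        obtain ⟨p, hp1, hp2⟩ := exists_cyl hU' mU
        exact ⟨p, V, O, hp1, hV, mV, hO1, fun z hz y' hy' => hUV ⟨hp2 hz, hy'⟩⟩
      choose! p V O l1 l2 l3 l4 l5 using hloc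
      obtain ⟨t, ht, hcov⟩ := hP.elim_nhds_subcover (fun T => cyl (p T))
        (fun T hT => (isClopen_cyl _).isOpen.mem_nhds (l1 T hT))
      let F : Finset ι := (t.biUnion fun T => (p T).image Prod.fst).filter fun α => x ∈ W α
      refine ⟨_, ⟨F, ⋂ T ∈ t, V T, O '' t, ⟨?_, ?_, ?_, ?_⟩, rfl⟩, ?_, ?_⟩
      · exact isOpen_biInter_finset fun T hT => l2 T (ht T hT)
      · rintro _ ⟨T, hT, rfl⟩
        exact l4 T (ht T hT)
      · exact t.finite_toSet.image _
      · intro z hz y' hy'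
        let z' : ι → Bool := fun α => z.1 α || decide (x ∈ W α)
        have hz' : z' ∈ P := fun α hα => by simp [z', hα]
        have := hcov hz'
        simp only [mem_iUnion] at this
        obtain ⟨T, hT, hTz⟩ := this
        refine ⟨O T, ⟨T, hT, rfl⟩, l5 T (ht T hT) z ?_ y' (mem_iInter₂.1 hy' T hT)⟩
        rintro ⟨α, b⟩ hab
        have h1 := hTz _ hab
        by_cases hα : x ∈ W α
        · have h2 : z.1 α = true := hz α (Finset.mem_filter.2
            ⟨Finset.mem_biUnion.2 ⟨T, hT, Finset.mem_image.2 ⟨_, hab, rfl⟩⟩, hα⟩)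
          simp only [z', hα, h2] at h1 ⊢
          simpa using h1
        · simpa [z', hα] using h1
      · exact mem_iInter₂.2 fun α hα => (Finset.mem_filter.1 hα).2
      · exact mem_iInter₂.2 fun T hT => l3 T (ht T hT))
  have h4 : ∀ R ∈ 𝓡, ∃ F V 𝒪', Rp F V 𝒪' ∧ R = (⋂ α ∈ F, W α) ×ˢ V := fun R hR => h1 hR
  choose! F V O' hR hReq using h4
  refine ⟨⋃ R ∈ 𝓡, O' R, iUnion₂_subset fun R h => (hR R h).2.1,
    h2.biUnion fun R h => (hR R h).2.2.1.countable, ?_⟩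
  rw [eq_univ_iff_forall]
  rintro ⟨⟨z, x, hx⟩, y⟩
  have : (x, y) ∈ ⋃₀ 𝓡 := h3 ▸ mem_univ _
  obtain ⟨R, hRm, hm⟩ := this
  rw [hReq R hRm] at hm
  obtain ⟨O, hO1, hO2⟩ := (hR R hRm).2.2.2 ⟨z, x, hx⟩ (fun α hα => hx α (mem_iInter₂.1 hm.1 α hα)) y hm.2
  exact ⟨O, mem_biUnion hRm hO1, hO2⟩

end

theorem ex_index (hCH : Cardinal.continuum.{u} = Cardinal.aleph 1) :
    ∃ (ι : Type u) (_ : LinearOrder ι), Om ι ∧ #ι = Cardinal.continuum ∧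
      ∃ c : ι → ℕ → Finset (ι × Bool), Function.Surjective c := by
  have hι : #((Cardinal.aleph 1 : Cardinal.{u}).ord.ToType) = Cardinal.continuum := by
    rw [mk_ord_toType, hCH]
  refine ⟨(Cardinal.aleph 1 : Cardinal.{u}).ord.ToType, inferInstance, ⟨inferInstance, ?_, ?_⟩, hι, ?_⟩
  · intro a
    rw [← Cardinal.le_aleph0_iff_set_countable, ← Cardinal.lt_aleph_one_iff]
    exact Cardinal.mk_Iio_toType_ord_lt a
  · rw [← Cardinal.le_aleph0_iff_set_countable, Cardinal.mk_univ, hι, not_le]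
    exact Cardinal.aleph0_lt_continuum
  · generalize (Cardinal.aleph 1 : Cardinal.{u}).ord.ToType = ι at hι
    have : Infinite ι := by
      rw [Cardinal.infinite_iff, hι]; exact Cardinal.aleph0_le_continuum
    have : #(ℕ → Finset (ι × Bool)) = #ι := by
      rw [Cardinal.mk_pi, Cardinal.prod_const]
      simp [hι]
    obtain ⟨e⟩ := Cardinal.eq.1 this
    exact ⟨e.symm, e.symm.surjective⟩

theorem final (hCH : Cardinal.continuum.{u} = Cardinal.aleph 1) (X : Type u) [TopologicalSpace X]
    (hprod : ProductivelyQuasiLindelofSp X) (hl : LindelofNumberLE (ℕ → X) Cardinal.continuum) :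
    PowerfullyQuasiLindelofSp X := by
  classical
  obtain ⟨ι, _, _, hι, c, hc⟩ := ex_index hCH
  intro 𝒰 hU hUu
  let Bp : Set (ℕ → X) → Finset ℕ → (ℕ → Set X) → Set (ℕ → X) → Prop := fun B I V U =>
    (∀ i, IsOpen (V i)) ∧ B = {x | ∀ i ∈ I, x i ∈ V i} ∧ U ∈ 𝒰 ∧ B ⊆ U
  obtain ⟨𝒱, h1, h2, h3⟩ := hl {B | ∃ I V U, Bp B I V U}
    (by
      rintro B ⟨I, V, U, h1, rfl, -⟩
      have : {x : ℕ → X | ∀ i ∈ I, x i ∈ V i} = ⋂ i ∈ I, (fun x : ℕ → X => x i) ⁻¹' (V i) := by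
        ext x; simp
      rw [this]
      exact isOpen_biInter_finset fun i _ => (h1 i).preimage (continuous_apply i))
    (by
      rw [eq_univ_iff_forall]
      intro x
      have : x ∈ ⋃₀ 𝒰 := hUu ▸ mem_univ _
      obtain ⟨U, hU1, hU2⟩ := this
      obtain ⟨I, V, a1, a2⟩ := isOpen_pi_iff.1 (hU U hU1) x hU2
      refine ⟨{x | ∀ i ∈ I, x i ∈ (if i ∈ I then V i else univ)}, ⟨I, fun i => if i ∈ I then V i else univ, U, ?_, rfl, hU1, ?_⟩, ?_⟩
      · intro i
        by_cases hi : i ∈ I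
        · simpa [hi] using (a1 i hi).1
        · simp [hi]
      · intro y hy
        apply a2
        intro i hi
        have := hy i hi
        rwa [if_pos (Finset.mem_coe.1 hi)] at this
      · intro i hi
        rw [if_pos hi]
        exact (a1 i hi).2)
  have h4 : ∀ v : 𝒱, ∃ I V U, Bp v.1 I V U := fun v => h1 v.2
  choose I V U b1 b2 b3 b4 using h4
  have hcard : #(𝒱 × ℕ) ≤ #ι := by
    rw [hι, Cardinal.mk_prod]
    simp only [Cardinal.lift_id', Cardinal.mk_nat, Cardinal.lift_aleph0, Cardinal.lift_uzero]
    calc #𝒱 * ℵ₀ ≤ Cardinal.continuum * ℵ₀ := by gcongr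
      _ = Cardinal.continuum := by simp
  obtain ⟨s⟩ := hcard
  let W : ι → Set X := Function.extend s (fun w => V w.1 w.2) (fun _ => univ)
  have hWs : ∀ v i, W (s (v, i)) = V v i := fun v i => s.injective.extend_apply _ _ (v, i)
  have hW : ∀ α, IsOpen (W α) := by
    intro α
    by_cases h : ∃ w, s w = α
    · obtain ⟨⟨v, i⟩, rfl⟩ := h
      rw [hWs]; exact b1 v i
    · have : W α = Set.univ := Function.extend_apply' _ _ _ h
      rw [this]; exact isOpen_univ
  let q : 𝒱 → Finset (ℕ × ι) := fun v => (I v).image fun i => (i, s (v, i))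
  obtain ⟨𝒬, c1, c2, c3⟩ := power hc (lem1 hW hprod) (𝒬 := range q) (by
    intro z hz
    choose x hx using hz
    have : x ∈ ⋃₀ 𝒱 := h3 ▸ mem_univ _
    obtain ⟨v, hv, hxv⟩ := this
    refine ⟨q ⟨v, hv⟩, ⟨_, rfl⟩, ?_⟩
    intro r hr
    obtain ⟨i, hi, rfl⟩ := Finset.mem_image.1 hr
    apply hx
    rw [hWs]
    have hb := b2 ⟨v, hv⟩
    simp only at hb
    rw [hb] at hxv
    exact hxv i hi)
  refine ⟨U '' (q ⁻¹' 𝒬 ∩ Set.range fun r : 𝒬 => (c1 r.2).choose), ?_, ?_, ?_⟩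
  · rintro _ ⟨v, -, rfl⟩
    exact b3 v
  · have : Countable 𝒬 := c2
    exact ((countable_range _).mono inter_subset_right).image _
  · rw [eq_univ_iff_forall]
    intro x
    obtain ⟨r, hr, hxr⟩ := c3 (fun i α => decide (x i ∈ W α)) trivial (fun n => ⟨x n, fun α h => by simpa using h⟩)
    have hq := (c1 hr).choose_spec
    set v := (c1 hr).choose with hv
    refine ⟨U v, ⟨v, ⟨?_, ⟨r, hr⟩, rfl⟩, rfl⟩, b4 v ?_⟩
    · change q v ∈ 𝒬
      rw [hq]; exact hr
    · rw [b2 v]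
      intro i hi
      rw [← hq] at hxr
      have := hxr (i, s (v, i)) (Finset.mem_image.2 ⟨i, hi, rfl⟩)
      rw [← hWs]
      simpa using this

end PQL

/-- Under CH, every productively quasi-Lindelöf space X with
ℓ(X^ω) ≤ 𝔠 is powerfully quasi-Lindelöf. -/
theorem stmt14 (hCH : Cardinal.continuum = Cardinal.aleph 1)
    (X : Type u) [TopologicalSpace X]
    (hprod : ProductivelyQuasiLindelofSp X)
    (hl : LindelofNumberLE (ℕ → X) Cardinal.continuum) :
    PowerfullyQuasiLindelofSp X := by
  refine PQL.final ?_ X hprod hl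
  have h := congrArg Cardinal.lift.{u} hCH
  simp only [Cardinal.lift_continuum, Cardinal.lift_aleph, Ordinal.lift_one] at h
  apply Cardinal.lift_injective
  simp only [Cardinal.lift_continuum, Cardinal.lift_aleph, Ordinal.lift_one]
  exact h
end
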